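/- arXiv:2410.00870 — 5 statements merged into one kernel-verified Lean document; each statement's English description precedes it below -/
import Mathlib

section
/- Let a, b ∈ ℚ and suppose f(x) = x^12 + a·x^6 + b is irreducible over ℚ. Assume: b is not a square in ℚ; b·(a^2 − 4b) is not a square in ℚ; 3·(4b − a^2) is not a square in ℚ; either −3b is a square in ℚ or 3b·(4b − a^2) is a square in ℚ; b is not a cube in ℚ; and the cubic x^3 − 3·b·x + a·b has no rational root. Then the Galois group of f over ℚ has order 72. -/
open Polynomial
open IntermediateField Module

section gen
variable {F K : Type*} [Field F] [Field K] [Algebra F K]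

theorem aux_minpoly {p : ℕ} (hp : p.Prime) {x : K} {c : F} (hx : x ^ p = algebraMap F K c)
    (hc : ∀ e : F, e ^ p ≠ c) : minpoly F x = X ^ p - C c := by
  symm
  apply minpoly.eq_of_irreducible_of_monic (X_pow_sub_C_irreducible_of_prime hp hc)
  · simp [hx]
  · exact monic_X_pow_sub_C _ hp.ne_zero

theorem aux_integral {p : ℕ} (hp : p.Prime) {x : K} {c : F} (hx : x ^ p = algebraMap F K c) :
    IsIntegral F x :=
  ⟨X ^ p - C c, monic_X_pow_sub_C _ hp.ne_zero, by simp [hx]⟩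

theorem aux_finrank {p : ℕ} (hp : p.Prime) {x : K} {c : F} (hx : x ^ p = algebraMap F K c)
    (hc : ∀ e : F, e ^ p ≠ c) : finrank F F⟮x⟯ = p := by
  rw [adjoin.finrank (aux_integral hp hx), aux_minpoly hp hx hc, natDegree_X_pow_sub_C]

theorem aux_repr {p : ℕ} (hp : p.Prime) {x : K} {c : F} (hx : x ^ p = algebraMap F K c)
    (z : K) (hz : z ∈ F⟮x⟯) : ∃ g : F[X], g.natDegree < p ∧ z = aeval x g := by
  rw [← mem_toSubalgebra, adjoin_simple_toSubalgebra_of_isAlgebraic (aux_integral hp hx).isAlgebraic,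
    Algebra.adjoin_singleton_eq_range_aeval] at hz
  obtain ⟨g, rfl⟩ := hz
  have hm : (X ^ p - C c : F[X]).Monic := monic_X_pow_sub_C _ hp.ne_zero
  refine ⟨g %ₘ (X ^ p - C c), ?_, ?_⟩
  · have := natDegree_modByMonic_lt g hm (by
      intro h
      have := congrArg natDegree h
      rw [natDegree_X_pow_sub_C] at this
      simp at this
      exact hp.ne_zero this)
    rwa [natDegree_X_pow_sub_C] at this
  · rw [aeval_modByMonic_eq_self_of_root]
    · rfl
    · simp [hx]

theorem aux_indep {p : ℕ} (hp : p.Prime) {x : K} {c : F} (hx : x ^ p = algebraMap F K c)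
    (hc : ∀ e : F, e ^ p ≠ c) (g : F[X]) (hg : g.natDegree < p) (h0 : aeval x g = 0) : g = 0 := by
  by_contra hne
  have := natDegree_le_natDegree (minpoly.degree_le_of_ne_zero F x hne h0)
  rw [aux_minpoly hp hx hc, natDegree_X_pow_sub_C] at this
  omega

theorem aux_repr2 {x : K} {c : F} (hx : x ^ 2 = algebraMap F K c)
    (z : K) (hz : z ∈ F⟮x⟯) : ∃ u v : F, z = algebraMap F K u + algebraMap F K v * x := by
  obtain ⟨g, hg, rfl⟩ := aux_repr Nat.prime_two hx z hz
  refine ⟨g.coeff 0, g.coeff 1, ?_⟩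
  rw [aeval_eq_sum_range' hg]
  simp [Finset.sum_range_succ, Algebra.smul_def]

theorem aux_repr3 {x : K} {c : F} (hx : x ^ 3 = algebraMap F K c)
    (z : K) (hz : z ∈ F⟮x⟯) : ∃ u v w : F,
      z = algebraMap F K u + algebraMap F K v * x + algebraMap F K w * x ^ 2 := by
  obtain ⟨g, hg, rfl⟩ := aux_repr Nat.prime_three hx z hz
  refine ⟨g.coeff 0, g.coeff 1, g.coeff 2, ?_⟩
  rw [aeval_eq_sum_range' hg]
  simp [Finset.sum_range_succ, Algebra.smul_def]

theorem aux_indep2 {x : K} {c : F} (hx : x ^ 2 = algebraMap F K c)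
    (hc : ∀ e : F, e ^ 2 ≠ c) {u v : F} (h : algebraMap F K u + algebraMap F K v * x = 0) :
    u = 0 ∧ v = 0 := by
  have := aux_indep Nat.prime_two hx hc (C u + C v * X)
    (by have : (C u + C v * X).natDegree ≤ 1 := by compute_degree
        omega) (by simpa using h)
  constructor
  · simpa using congrArg (fun q => coeff q 0) this
  · simpa using congrArg (fun q => coeff q 1) this

theorem aux_indep3 {x : K} {c : F} (hx : x ^ 3 = algebraMap F K c)
    (hc : ∀ e : F, e ^ 3 ≠ c) {u v w : F}
    (h : algebraMap F K u + algebraMap F K v * x + algebraMap F K w * x ^ 2 = 0) :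
    u = 0 ∧ v = 0 ∧ w = 0 := by
  have := aux_indep Nat.prime_three hx hc (C u + C v * X + C w * X ^ 2)
    (by have : (C u + C v * X + C w * X ^ 2).natDegree ≤ 2 := by compute_degree
        omega) (by simpa using h)
  refine ⟨?_, ?_, ?_⟩
  · simpa using congrArg (fun q => coeff q 0) this
  · simpa [coeff_X, coeff_C] using congrArg (fun q => coeff q 1) this
  · simpa [coeff_X, coeff_C] using congrArg (fun q => coeff q 2) this

theorem four_dvd [CharZero F] {x y : K} {c e : F} (hx : x ^ 2 = algebraMap F K c)
    (hy : y ^ 2 = algebraMap F K e) (hc : ∀ t : F, t ^ 2 ≠ c) (he : ∀ t : F, t ^ 2 ≠ e)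
    (hce : ∀ t : F, t ^ 2 * c ≠ e) : 4 ∣ finrank F K := by
  have h1 := aux_finrank Nat.prime_two hx hc
  have h2 : finrank F⟮x⟯ F⟮x⟯⟮y⟯ = 2 := by
    apply aux_finrank Nat.prime_two (c := algebraMap F F⟮x⟯ e)
    · rw [hy]; rfl
    · rintro ⟨z, hz⟩ h
      have h' : z ^ 2 = algebraMap F K e := congrArg Subtype.val h
      obtain ⟨u, v, rfl⟩ := aux_repr2 hx z hz
      have h3 : algebraMap F K (u ^ 2 + c * v ^ 2 - e) + algebraMap F K (2 * u * v) * x = 0 := by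
        simp only [map_add, map_sub, map_mul, map_pow, map_ofNat]
        rw [← h', ← hx]; ring
      obtain ⟨h4, h5⟩ := aux_indep2 hx hc h3
      have h6 : u = 0 ∨ v = 0 := by simpa using h5
      rcases h6 with rfl | rfl
      · exact hce v (by linear_combination h4)
      · exact he u (by linear_combination h4)
  rw [← finrank_mul_finrank F F⟮x⟯ K, ← finrank_mul_finrank F⟮x⟯ F⟮x⟯⟮y⟯ K, h1, h2]
  rw [← mul_assoc]
  exact Dvd.intro _ rfl

theorem nine_dvd [CharZero F] {x y : K} {c e : F} (hx : x ^ 3 = algebraMap F K c)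
    (hy : y ^ 3 = algebraMap F K e) (hc : ∀ t : F, t ^ 3 ≠ c) (he : ∀ t : F, t ^ 3 ≠ e)
    (hce : ∀ t : F, t ^ 3 * c ≠ e) (hce2 : ∀ t : F, t ^ 3 * c ^ 2 ≠ e) : 9 ∣ finrank F K := by
  have h1 := aux_finrank Nat.prime_three hx hc
  have h2 : finrank F⟮x⟯ F⟮x⟯⟮y⟯ = 3 := by
    apply aux_finrank Nat.prime_three (c := algebraMap F F⟮x⟯ e)
    · rw [hy]; rfl
    · rintro ⟨z, hz⟩ h
      have h' : z ^ 3 = algebraMap F K e := congrArg Subtype.val h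
      obtain ⟨u, v, w, rfl⟩ := aux_repr3 hx z hz
      have h3 : algebraMap F K (u ^ 3 + c * v ^ 3 + c ^ 2 * w ^ 3 + 6 * c * u * v * w - e)
          + algebraMap F K (3 * (u ^ 2 * v + c * u * w ^ 2 + c * v ^ 2 * w)) * x
          + algebraMap F K (3 * (u ^ 2 * w + u * v ^ 2 + c * v * w ^ 2)) * x ^ 2 = 0 := by
        simp only [map_add, map_sub, map_mul, map_pow, map_ofNat]
        rw [← h', ← hx]; ring
      obtain ⟨h4, h5, h6⟩ := aux_indep3 hx hc h3
      have h5 : u ^ 2 * v + c * u * w ^ 2 + c * v ^ 2 * w = 0 := by simpa using h5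
      have h6 : u ^ 2 * w + u * v ^ 2 + c * v * w ^ 2 = 0 := by simpa using h6
      have h7 : w * (c * v ^ 3 - u ^ 3) = 0 := by linear_combination v * h5 - u * h6
      rcases mul_eq_zero.1 h7 with rfl | h8
      · have h9 : u = 0 ∨ v = 0 := by simpa using h5
        rcases h9 with rfl | rfl
        · exact hce v (by linear_combination h4)
        · exact he u (by linear_combination h4)
      · by_cases hv : v = 0
        · subst hv
          have : u = 0 := by simpa using h8
          subst this
          exact hce2 w (by linear_combination h4)
        · refine hc (u / v) ?_
          field_simp
          linear_combination -h8
  rw [← finrank_mul_finrank F F⟮x⟯ K, ← finrank_mul_finrank F⟮x⟯ F⟮x⟯⟮y⟯ K, h1, h2]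
  rw [← mul_assoc]
  exact Dvd.intro _ rfl

end gen

theorem quad_dvd {K : Type*} [Field K] [CharZero K] [Algebra ℚ K] (a b : ℚ) {x y : K}
    (hxy : x ^ 6 + y ^ 6 = -algebraMap ℚ K a) (hxy' : x ^ 6 * y ^ 6 = algebraMap ℚ K b)
    (hdns : ∀ s : ℚ, s ^ 2 ≠ a ^ 2 - 4 * b)
    (hb_nsq : ¬ ∃ s : ℚ, s ^ 2 = b)
    (hbd : ¬ ∃ s : ℚ, s ^ 2 = b * (a ^ 2 - 4 * b))
    (hd : ¬ ∃ s : ℚ, s ^ 2 = 3 * (4 * b - a ^ 2))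
    (hnc : ¬ ∃ c : ℚ, c ^ 3 = b)
    (hnr : ¬ ∃ r : ℚ, r ^ 3 - 3 * b * r + a * b = 0) : 72 ∣ finrank ℚ K := by
  have hs : (x ^ 6 - y ^ 6) ^ 2 = algebraMap ℚ K (a ^ 2 - 4 * b) := by
    simp only [map_sub, map_mul, map_pow, map_ofNat]
    linear_combination (x ^ 6 + y ^ 6 - algebraMap ℚ K a) * hxy - 4 * hxy'
  set s : K := x ^ 6 - y ^ 6 with hsdef
  have hF := aux_finrank Nat.prime_two hs hdns
  have hb0 : b ≠ 0 := by rintro rfl; exact hb_nsq ⟨0, by simp⟩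
  obtain ⟨S, hS⟩ : ∃ S : ℚ⟮s⟯, (S : K) = s := ⟨⟨s, mem_adjoin_simple_self ℚ s⟩, rfl⟩
  have rep : ∀ z : ℚ⟮s⟯, ∃ p q : ℚ, z = p + q * S := by
    rintro ⟨z, hz⟩
    obtain ⟨u, v, rfl⟩ := aux_repr2 hs z hz
    refine ⟨u, v, Subtype.ext ?_⟩
    simp [hS]
  have hS2 : S ^ 2 = ((a ^ 2 - 4 * b : ℚ) : ℚ⟮s⟯) := by
    apply (algebraMap ℚ⟮s⟯ K).injective
    have : algebraMap ℚ⟮s⟯ K S = s := hS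
    rw [map_pow, this, hs, map_ratCast, eq_ratCast]
  have ind : ∀ p q : ℚ, (p + q * S : ℚ⟮s⟯) = 0 → p = 0 ∧ q = 0 := by
    intro p q h
    apply aux_indep2 hs hdns
    have := congrArg Subtype.val h
    simpa [hS] using this
  push_cast at hS2
  have hx6 : x ^ 6 = algebraMap ℚ⟮s⟯ K ((-a + S) / 2) := by
    have : algebraMap ℚ⟮s⟯ K S = s := hS
    simp only [map_div₀, map_add, map_sub, map_neg, map_ratCast, map_ofNat, this]
    rw [eq_ratCast] at hxy
    linear_combination (hxy + hsdef) / 2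
  have hy6 : y ^ 6 = algebraMap ℚ⟮s⟯ K ((-a - S) / 2) := by
    have : algebraMap ℚ⟮s⟯ K S = s := hS
    simp only [map_div₀, map_add, map_sub, map_neg, map_ratCast, map_ofNat, this]
    rw [eq_ratCast] at hxy
    linear_combination (hxy - hsdef) / 2
  have cb : ∀ b' : ℚ, (b' : ℚ⟮s⟯) = 0 → b' = 0 := fun b' h => by exact_mod_cast h
  -- both signs at once
  have key2 : ∀ ε : ℚ, ε ^ 2 = 1 → ∀ t : ℚ⟮s⟯, t ^ 2 ≠ (-a + ε * S) / 2 := by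
    intro ε hε t ht
    obtain ⟨p, q, rfl⟩ := rep t
    obtain ⟨h1, h2⟩ := ind (p ^ 2 + (a ^ 2 - 4 * b) * q ^ 2 + a / 2) (2 * p * q - ε / 2) (by
      push_cast
      linear_combination ht - q ^ 2 * hS2)
    refine hb_nsq ⟨p ^ 2 - (a ^ 2 - 4 * b) * q ^ 2, ?_⟩
    have h1' : p ^ 2 + (a ^ 2 - 4 * b) * q ^ 2 = - a / 2 := by linear_combination h1
    have h2' : 2 * p * q = ε / 2 := by linear_combination h2
    have : (p ^ 2 - (a ^ 2 - 4 * b) * q ^ 2) ^ 2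
      = (p ^ 2 + (a ^ 2 - 4 * b) * q ^ 2) ^ 2 - (a ^ 2 - 4 * b) * (2 * p * q) ^ 2 := by ring
    rw [this, h1', h2']
    linear_combination -(a ^ 2 - 4 * b) / 4 * hε
  have key3 : ∀ ε : ℚ, ε ^ 2 = 1 → ∀ t : ℚ⟮s⟯, t ^ 3 ≠ (-a + ε * S) / 2 := by
    intro ε hε t ht
    obtain ⟨p, q, rfl⟩ := rep t
    obtain ⟨h1, h2⟩ := ind (p ^ 3 + 3 * (a ^ 2 - 4 * b) * p * q ^ 2 + a / 2)
      (3 * p ^ 2 * q + (a ^ 2 - 4 * b) * q ^ 3 - ε / 2) (by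
      push_cast
      linear_combination ht - (3 * p * q ^ 2 + q ^ 3 * S) * hS2)
    refine hnc ⟨p ^ 2 - (a ^ 2 - 4 * b) * q ^ 2, ?_⟩
    have h1' : p ^ 3 + 3 * (a ^ 2 - 4 * b) * p * q ^ 2 = - a / 2 := by linear_combination h1
    have h2' : 3 * p ^ 2 * q + (a ^ 2 - 4 * b) * q ^ 3 = ε / 2 := by linear_combination h2
    have : (p ^ 2 - (a ^ 2 - 4 * b) * q ^ 2) ^ 3
      = (p ^ 3 + 3 * (a ^ 2 - 4 * b) * p * q ^ 2) ^ 2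
        - (a ^ 2 - 4 * b) * (3 * p ^ 2 * q + (a ^ 2 - 4 * b) * q ^ 3) ^ 2 := by ring
    rw [this, h1', h2']
    linear_combination -(a ^ 2 - 4 * b) / 4 * hε
  have bsq : ∀ t : ℚ⟮s⟯, t ^ 2 ≠ b := by
    intro t ht
    obtain ⟨p, q, rfl⟩ := rep t
    obtain ⟨h1, h2⟩ := ind (p ^ 2 + (a ^ 2 - 4 * b) * q ^ 2 - b) (2 * p * q) (by
      push_cast
      linear_combination ht - q ^ 2 * hS2)
    have h2 : p = 0 ∨ q = 0 := by simpa using h2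
    rcases h2 with rfl | rfl
    · exact hbd ⟨(a ^ 2 - 4 * b) * q, by linear_combination (a ^ 2 - 4 * b) * h1⟩
    · exact hb_nsq ⟨p, by linear_combination h1⟩
  have bcu : ∀ t : ℚ⟮s⟯, t ^ 3 ≠ b := by
    intro t ht
    obtain ⟨p, q, rfl⟩ := rep t
    obtain ⟨h1, h2⟩ := ind (p ^ 3 + 3 * (a ^ 2 - 4 * b) * p * q ^ 2 - b)
      (q * (3 * p ^ 2 + (a ^ 2 - 4 * b) * q ^ 2)) (by
      push_cast
      linear_combination ht - (3 * p * q ^ 2 + q ^ 3 * S) * hS2)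
    by_cases hq : q = 0
    · subst hq; exact hnc ⟨p, by linear_combination h1⟩
    · have h3 := (mul_eq_zero.1 h2).resolve_left hq
      refine hd ⟨3 * p / q, ?_⟩
      field_simp
      linear_combination h3
  have abcu : ∀ t : ℚ⟮s⟯, t ^ 3 ≠ b * ((-a + S) / 2) := by
    intro t ht
    obtain ⟨p, q, rfl⟩ := rep t
    obtain ⟨h1, h2⟩ := ind (p ^ 3 + 3 * (a ^ 2 - 4 * b) * p * q ^ 2 + a * b / 2)
      (3 * p ^ 2 * q + (a ^ 2 - 4 * b) * q ^ 3 - b / 2) (by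
      push_cast
      linear_combination ht - (3 * p * q ^ 2 + q ^ 3 * S) * hS2)
    have h1' : p ^ 3 + 3 * (a ^ 2 - 4 * b) * p * q ^ 2 = - (a * b) / 2 := by linear_combination h1
    have h2' : 3 * p ^ 2 * q + (a ^ 2 - 4 * b) * q ^ 3 = b / 2 := by linear_combination h2
    have h3 : (p ^ 2 - (a ^ 2 - 4 * b) * q ^ 2) ^ 3 = b ^ 3 := by
      have : (p ^ 2 - (a ^ 2 - 4 * b) * q ^ 2) ^ 3
        = (p ^ 3 + 3 * (a ^ 2 - 4 * b) * p * q ^ 2) ^ 2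
          - (a ^ 2 - 4 * b) * (3 * p ^ 2 * q + (a ^ 2 - 4 * b) * q ^ 3) ^ 2 := by ring
      rw [this, h1', h2']; ring
    have h4 : p ^ 2 - (a ^ 2 - 4 * b) * q ^ 2 = b :=
      (Odd.strictMono_pow (R := ℚ) (n := 3) (by decide)).injective h3
    exact hnr ⟨2 * p, by linear_combination 2 * h1 + 6 * p * h4⟩
  have hprod : ((-a + S) / 2) * ((-a - S) / 2) = (b : ℚ⟮s⟯) := by
    linear_combination -hS2 / 4
  have hbF : (b : ℚ⟮s⟯) ≠ 0 := by exact_mod_cast hb0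
  have hαF : ((-a + S) / 2 : ℚ⟮s⟯) ≠ 0 := by
    intro h; rw [h, zero_mul] at hprod; exact hbF hprod.symm
  have k2p := key2 1 (by norm_num)
  have k2m := key2 (-1) (by norm_num)
  have k3p := key3 1 (by norm_num)
  have k3m := key3 (-1) (by norm_num)
  simp only [Rat.cast_one, one_mul, Rat.cast_neg, neg_mul, ← sub_eq_add_neg]
    at k2p k2m k3p k3m
  have h4 : 4 ∣ finrank ℚ⟮s⟯ K := by
    apply four_dvd (x := x ^ 3) (y := y ^ 3) (by rw [← hx6]; ring) (by rw [← hy6]; ring)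
      k2p k2m
    intro t ht
    refine bsq (t * ((-a + S) / 2)) ?_
    rw [← hprod, ← ht]; ring
  have h9 : 9 ∣ finrank ℚ⟮s⟯ K := by
    apply nine_dvd (x := x ^ 2) (y := y ^ 2) (by rw [← hx6]; ring) (by rw [← hy6]; ring)
      k3p k3m
    · intro t ht
      refine abcu (t * ((-a + S) / 2)) ?_
      rw [← hprod, ← ht]; ring
    · intro t ht
      refine bcu (t * ((-a + S) / 2)) ?_
      rw [← hprod, ← ht]; ring
  have h36 : 36 ∣ finrank ℚ⟮s⟯ K := by
    have := Nat.Coprime.mul_dvd_of_dvd_of_dvd (by decide : Nat.Coprime 4 9) h4 h9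
    simpa using this
  rw [← finrank_mul_finrank ℚ ℚ⟮s⟯ K, hF]
  exact Nat.mul_dvd_mul_left 2 h36

theorem nonsq (a b : ℚ) (hirr : Irreducible (X ^ 12 + C a * X ^ 6 + C b : ℚ[X])) (s : ℚ) :
    s ^ 2 ≠ a ^ 2 - 4 * b := by
  intro h
  have hfac : (X ^ 12 + C a * X ^ 6 + C b : ℚ[X]) =
      (X ^ 6 - C ((-a + s) / 2)) * (X ^ 6 - C ((-a - s) / 2)) := by
    have h1 : a = -((-a + s) / 2 + (-a - s) / 2) := by ring
    have h2 : b = ((-a + s) / 2) * ((-a - s) / 2) := by linear_combination h / 4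
    generalize (-a + s) / 2 = u at *
    generalize (-a - s) / 2 = v at *
    rw [h1, h2]
    simp only [C_neg, C_add, C_mul]
    ring
  rcases hirr.isUnit_or_isUnit hfac with h | h <;>
  · have := natDegree_eq_zero_of_isUnit h
    rw [natDegree_X_pow_sub_C] at this
    omega

theorem upper {K : Type*} [Field K] [CharZero K] [Algebra ℚ K] (a b : ℚ) {x y : K}
    (hxy : x ^ 6 + y ^ 6 = -algebraMap ℚ K a) (hxy' : x ^ 6 * y ^ 6 = algebraMap ℚ K b)
    (hb0 : b ≠ 0)
    (htop : Algebra.adjoin ℚ ((X ^ 12 + C a * X ^ 6 + C b : ℚ[X]).rootSet K) = ⊤)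
    (h3b : (∃ s : ℚ, s ^ 2 = -3 * b) ∨ ∃ s : ℚ, s ^ 2 = 3 * b * (4 * b - a ^ 2))
    (hdns : ∀ s : ℚ, s ^ 2 ≠ a ^ 2 - 4 * b) :
    finrank ℚ K ≤ 72 := by
  have hbK : algebraMap ℚ K b ≠ 0 := by simpa using hb0
  have hx0 : x ≠ 0 := by rintro rfl; apply hbK; rw [← hxy']; simp
  have hy0 : y ≠ 0 := by rintro rfl; apply hbK; rw [← hxy']; simp
  have hmon : (X ^ 12 + C a * X ^ 6 + C b : ℚ[X]).Monic := by monicity!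
  have hdeg : (X ^ 12 + C a * X ^ 6 + C b : ℚ[X]).natDegree = 12 := by compute_degree!
  have hxr : aeval x (X ^ 12 + C a * X ^ 6 + C b : ℚ[X]) = 0 := by
    simp only [map_add, map_mul, map_pow, aeval_X, aeval_C]
    linear_combination -hxy' + x ^ 6 * hxy
  have hxi : IsIntegral ℚ x := ⟨_, hmon, hxr⟩
  have h1 : finrank ℚ ℚ⟮x⟯ ≤ 12 := by
    rw [adjoin.finrank hxi, ← hdeg]
    exact natDegree_le_natDegree (minpoly.min ℚ x hmon hxr)
  let c : ℚ⟮x⟯ := -algebraMap ℚ ℚ⟮x⟯ a - (AdjoinSimple.gen ℚ x) ^ 6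
  have hc : algebraMap ℚ⟮x⟯ K c = y ^ 6 := by
    have : algebraMap ℚ⟮x⟯ K c = - algebraMap ℚ K a - x ^ 6 := by
      simp [c]
    rw [this]; linear_combination -hxy
  have hmon2 : (X ^ 6 - C c).Monic := monic_X_pow_sub_C _ (by norm_num)
  have hyr : aeval y (X ^ 6 - C c) = 0 := by simp [hc]
  have hyi : IsIntegral ℚ⟮x⟯ y := ⟨_, hmon2, hyr⟩
  have h2 : finrank ℚ⟮x⟯ ℚ⟮x⟯⟮y⟯ ≤ 6 := by
    rw [adjoin.finrank hyi]
    have := natDegree_le_natDegree (minpoly.min ℚ⟮x⟯ y hmon2 hyr)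
    rwa [natDegree_X_pow_sub_C] at this
  have hxm : x ∈ ℚ⟮x⟯⟮y⟯ := IntermediateField.algebraMap_mem ℚ⟮x⟯⟮y⟯ (AdjoinSimple.gen ℚ x)
  have hym : y ∈ ℚ⟮x⟯⟮y⟯ := mem_adjoin_simple_self _ y
  have hqm : ∀ q : ℚ, algebraMap ℚ K q ∈ ℚ⟮x⟯⟮y⟯ := fun q => by
    rw [IsScalarTower.algebraMap_apply ℚ ℚ⟮x⟯ K]
    exact IntermediateField.algebraMap_mem ℚ⟮x⟯⟮y⟯ (algebraMap ℚ ℚ⟮x⟯ q)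
  have hs : (x ^ 6 - y ^ 6) ^ 2 = algebraMap ℚ K (a ^ 2 - 4 * b) := by
    simp only [map_sub, map_mul, map_pow, map_ofNat]
    linear_combination (x ^ 6 + y ^ 6 - algebraMap ℚ K a) * hxy - 4 * hxy'
  have hdK : x ^ 6 - y ^ 6 ≠ 0 := by
    intro h0
    rw [h0] at hs
    refine hdns 0 ((algebraMap ℚ K).injective ?_)
    rw [← hs]; simp
  -- a square root of -3
  obtain ⟨w, hw, hw3⟩ : ∃ w ∈ ℚ⟮x⟯⟮y⟯, w ^ 2 = -3 := by
    have hsm : x ^ 6 - y ^ 6 ∈ ℚ⟮x⟯⟮y⟯ := sub_mem (pow_mem hxm 6) (pow_mem hym 6)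
    rcases h3b with ⟨s, h⟩ | ⟨s, h⟩
    · refine ⟨algebraMap ℚ K s / (x ^ 3 * y ^ 3),
        div_mem (hqm s) (mul_mem (pow_mem hxm 3) (pow_mem hym 3)), ?_⟩
      have h' := congrArg (algebraMap ℚ K) h
      simp only [map_mul, map_pow, map_neg, map_ofNat] at h'
      rw [div_pow, h', ← hxy']
      field_simp
    · refine ⟨algebraMap ℚ K s / (x ^ 3 * y ^ 3 * (x ^ 6 - y ^ 6)),
        div_mem (hqm s) (mul_mem (mul_mem (pow_mem hxm 3) (pow_mem hym 3)) hsm), ?_⟩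
      have h' := congrArg (algebraMap ℚ K) h
      have h'' : algebraMap ℚ K s ^ 2 = -3 * (x ^ 6 * y ^ 6) * (x ^ 6 - y ^ 6) ^ 2 := by
        rw [hs, hxy']
        simp only [map_mul, map_pow, map_neg, map_sub, map_ofNat] at h' ⊢
        rw [h']; ring
      rw [div_pow, h'', div_eq_iff (by positivity)]
      ring
  have h2K : (2 : K) ≠ 0 := by norm_num
  have h2m : (2 : K) ∈ ℚ⟮x⟯⟮y⟯ := by simpa using hqm 2
  have hζ : ∀ z : K, z ^ 6 = 1 → z ∈ ℚ⟮x⟯⟮y⟯ := by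
    intro z hz
    have key : ∀ e : K, e ∈ ℚ⟮x⟯⟮y⟯ → (2 * z + e) ^ 2 = -3 → z ∈ ℚ⟮x⟯⟮y⟯ := by
      intro e he h
      rw [← hw3] at h
      rcases sq_eq_sq_iff_eq_or_eq_neg.1 h with h | h
      · have : z = (w - e) / 2 := by field_simp; linear_combination h
        rw [this]; exact div_mem (sub_mem hw he) h2m
      · have : z = (-w - e) / 2 := by field_simp; linear_combination h
        rw [this]; exact div_mem (sub_mem (neg_mem hw) he) h2m
    have hfac : (z - 1) * ((z + 1) * ((z ^ 2 + z + 1) * (z ^ 2 - z + 1))) = 0 := by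
      linear_combination hz
    rcases mul_eq_zero.1 hfac with h | h
    · rw [sub_eq_zero.1 h]; exact one_mem _
    rcases mul_eq_zero.1 h with h | h
    · rw [eq_neg_of_add_eq_zero_left h]; exact neg_mem (one_mem _)
    rcases mul_eq_zero.1 h with h | h
    · exact key 1 (one_mem _) (by linear_combination 4 * h)
    · exact key (-1) (neg_mem (one_mem _)) (by linear_combination 4 * h)
  have hroot : ∀ r t : K, t ≠ 0 → t ∈ ℚ⟮x⟯⟮y⟯ → r ^ 6 = t ^ 6 → r ∈ ℚ⟮x⟯⟮y⟯ := by
    intro r t ht htm h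
    have h3 := hζ (r / t) (by rw [div_pow, h, div_self (pow_ne_zero 6 ht)])
    have : r = r / t * t := by field_simp
    rw [this]; exact mul_mem h3 htm
  have hall : ∀ z : K, z ∈ ℚ⟮x⟯⟮y⟯ := by
    have hle : Algebra.adjoin ℚ ((X ^ 12 + C a * X ^ 6 + C b : ℚ[X]).rootSet K) ≤
        (ℚ⟮x⟯⟮y⟯.restrictScalars ℚ).toSubalgebra := by
      apply Algebra.adjoin_le
      intro r hr
      have hr := aeval_eq_zero_of_mem_rootSet hr
      simp only [map_add, map_mul, map_pow, aeval_X, aeval_C] at hr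
      have : (r ^ 6 - x ^ 6) * (r ^ 6 - y ^ 6) = 0 := by
        linear_combination hr + hxy' - r ^ 6 * hxy
      show r ∈ ℚ⟮x⟯⟮y⟯
      rcases mul_eq_zero.1 this with h | h
      · exact hroot r x hx0 hxm (sub_eq_zero.1 h)
      · exact hroot r y hy0 hym (sub_eq_zero.1 h)
    intro z
    rw [htop] at hle
    exact hle (Algebra.mem_top : z ∈ (⊤ : Subalgebra ℚ K))
  have htop' : ℚ⟮x⟯⟮y⟯ = ⊤ := eq_top_iff.2 fun z _ => hall z
  have h3 : finrank ℚ⟮x⟯ K ≤ 6 := by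
    rw [htop', finrank_top'] at h2
    exact h2
  rw [← finrank_mul_finrank ℚ ℚ⟮x⟯ K]
  calc _ ≤ 12 * 6 := Nat.mul_le_mul h1 h3
    _ = 72 := rfl

theorem ex_roots {K : Type*} [Field K] [Algebra ℚ K] (a b : ℚ)
    (hsp : ((X ^ 12 + C a * X ^ 6 + C b : ℚ[X]).map (algebraMap ℚ K)).Splits) :
    ∃ x y : K, x ^ 6 + y ^ 6 = -algebraMap ℚ K a ∧ x ^ 6 * y ^ 6 = algebraMap ℚ K b := by
  have hmap : (X ^ 12 + C a * X ^ 6 + C b : ℚ[X]).map (algebraMap ℚ K) =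
      X ^ 12 + C (algebraMap ℚ K a) * X ^ 6 + C (algebraMap ℚ K b) := by
    simp
  rw [hmap] at hsp
  generalize algebraMap ℚ K a = a' at *
  generalize algebraMap ℚ K b = b' at *
  have hdeg : (X ^ 12 + C a' * X ^ 6 + C b' : K[X]).degree = 12 := by compute_degree!
  have hne : (X ^ 12 + C a' * X ^ 6 + C b' : K[X]) ≠ 0 := by
    intro h; rw [h] at hdeg; simp at hdeg
  obtain ⟨x, hx⟩ := hsp.exists_eval_eq_zero (by rw [hdeg]; decide)
  simp only [eval_add, eval_mul, eval_pow, eval_X, eval_C] at hx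
  have hfac : (X ^ 12 + C a' * X ^ 6 + C b' : K[X]) =
      (X ^ 6 - C (x ^ 6)) * (X ^ 6 - C (-a' - x ^ 6)) := by
    have h2 : b' = x ^ 6 * (-a' - x ^ 6) := by linear_combination hx
    rw [h2]
    simp only [C_neg, C_sub, C_mul]
    ring
  have hsp2 : (X ^ 6 - C (-a' - x ^ 6) : K[X]).Splits :=
    hsp.of_dvd hne (hfac ▸ Dvd.intro_left _ rfl)
  obtain ⟨y, hy⟩ := hsp2.exists_eval_eq_zero (by
    rw [degree_X_pow_sub_C (by norm_num)]; decide)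
  simp only [eval_sub, eval_pow, eval_X, eval_C] at hy
  exact ⟨x, y, by linear_combination hy, by linear_combination x ^ 6 * hy - hx⟩

theorem gal_order_seventytwo_of_12T38 (a b : ℚ) (f : ℚ[X])
    (hf : f = X ^ 12 + C a * X ^ 6 + C b) (hirr : Irreducible f)
    (hb_nsq : ¬ ∃ s : ℚ, s ^ 2 = b)
    (hbd : ¬ ∃ s : ℚ, s ^ 2 = b * (a ^ 2 - 4 * b))
    (hd : ¬ ∃ s : ℚ, s ^ 2 = 3 * (4 * b - a ^ 2))
    (h3b : (∃ s : ℚ, s ^ 2 = -3 * b) ∨ ∃ s : ℚ, s ^ 2 = 3 * b * (4 * b - a ^ 2))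
    (hnc : ¬ ∃ c : ℚ, c ^ 3 = b)
    (hnr : ¬ ∃ r : ℚ, r ^ 3 - 3 * b * r + a * b = 0) :
    Nat.card f.Gal = 72 := by
  rw [Polynomial.Gal.card_of_separable hirr.separable]
  subst hf
  have hb0 : b ≠ 0 := by rintro rfl; exact hb_nsq ⟨0, by simp⟩
  have hdns := nonsq a b hirr
  obtain ⟨x, y, h1, h2⟩ := ex_roots a b (SplittingField.splits _)
  have : CharZero (X ^ 12 + C a * X ^ 6 + C b : ℚ[X]).SplittingField :=
    charZero_of_injective_algebraMap (algebraMap ℚ _).injective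
  have hup := upper a b h1 h2 hb0 (SplittingField.adjoin_rootSet _) h3b hdns
  have hdv := quad_dvd a b h1 h2 hdns hb_nsq hbd hd hnc hnr
  exact le_antisymm hup (Nat.le_of_dvd finrank_pos hdv)
end

section
/- Let a, b ∈ ℚ and suppose f(x) = x^12 + a·x^6 + b is irreducible over ℚ. Assume: b is not a square in ℚ; b·(a^2 − 4b) is not a square in ℚ; 3·(4b − a^2) is not a square in ℚ; −3b is not a square in ℚ; 3b·(4b − a^2) is not a square in ℚ; and either b is a cube in ℚ or the cubic x^3 − 3·b·x + a·b has a rational root. Then the Galois group of f over ℚ has order 48. -/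
open Polynomial

lemma aux_irr4 {F : Type*} [Field F] [CharZero F] (a b : F) (hirr : Irreducible (X ^ 12 + C a * X ^ 6 + C b : F[X])) :
    Irreducible (X ^ 4 + C a * X ^ 2 + C b : F[X]) := by
  apply Polynomial.of_irreducible_expand (p := 3) (by norm_num)
  have : expand F 3 (X ^ 4 + C a * X ^ 2 + C b : F[X]) = X ^ 12 + C a * X ^ 6 + C b := by
    simp only [map_add, map_mul, map_pow, expand_X, expand_C, ← pow_mul]
  rw [this]; exact hirr

lemma aux_minpoly4 {F : Type*} [Field F] [CharZero F] (a b : F) (hirr : Irreducible (X ^ 12 + C a * X ^ 6 + C b : F[X]))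
    {M : Type*} [Field M] [Algebra F M] (η : M)
    (hη : η ^ 4 + algebraMap F M a * η ^ 2 + algebraMap F M b = 0) :
    minpoly F η = X ^ 4 + C a * X ^ 2 + C b := by
  symm
  apply minpoly.eq_of_irreducible_of_monic (aux_irr4 a b hirr)
  · simpa using hη
  · monicity!

lemma aux_sq4 {F : Type*} [Field F] [CharZero F] (a b e : F) (hirr : Irreducible (X ^ 12 + C a * X ^ 6 + C b : F[X]))
    (hb : ¬ ∃ s : F, s ^ 2 = b) (he : e ≠ 0)
    {M : Type*} [Field M] [Algebra F M] (η : M)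
    (hη : η ^ 4 + algebraMap F M a * η ^ 2 + algebraMap F M b = 0)
    (c0 c1 c2 c3 : F)
    (hw : (algebraMap F M c0 + algebraMap F M c1 * η + algebraMap F M c2 * η ^ 2
      + algebraMap F M c3 * η ^ 3) ^ 2 = algebraMap F M e) :
    (∃ s : F, s ^ 2 = e) ∨ ∃ s : F, s ^ 2 = e * (a ^ 2 - 4 * b) := by
  have hdeg : (minpoly F η).natDegree = 4 := by
    rw [aux_minpoly4 a b hirr η hη]; compute_degree!
  have hli : ∀ u0 u1 u2 u3 : F, algebraMap F M u0 + algebraMap F M u1 * η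
      + algebraMap F M u2 * η ^ 2 + algebraMap F M u3 * η ^ 3 = 0 →
      u0 = 0 ∧ u1 = 0 ∧ u2 = 0 ∧ u3 = 0 := by
    intro u0 u1 u2 u3 h
    have hl := linearIndependent_pow (K := F) η
    rw [hdeg] at hl
    have := Fintype.linearIndependent_iff.1 hl ![u0, u1, u2, u3] (by
      simpa [Fin.sum_univ_four, Algebra.smul_def] using h)
    exact ⟨this 0, this 1, this 2, this 3⟩
  have h4 : η ^ 4 = - algebraMap F M a * η ^ 2 - algebraMap F M b := by linear_combination hη
  have h := hli (c0 ^ 2 - b * c2 ^ 2 - 2 * c1 * c3 * b + c3 ^ 2 * a * b - e)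
    (2 * (c0 * c1 - b * c2 * c3))
    (2 * c0 * c2 - a * c2 ^ 2 + c1 ^ 2 - 2 * a * c1 * c3 + (a ^ 2 - b) * c3 ^ 2)
    (2 * (c0 * c3 + c1 * c2 - a * c2 * c3)) (by
      push_cast [map_sub, map_add, map_mul, map_pow, map_ofNat]
      generalize algebraMap F M a = a' at *
      generalize algebraMap F M b = b' at *
      generalize algebraMap F M c0 = c0' at *
      generalize algebraMap F M c1 = c1' at *
      generalize algebraMap F M c2 = c2' at *
      generalize algebraMap F M c3 = c3' at *
      linear_combination hw - (c2' ^ 2 + 2 * c1' * c3' + 2 * c2' * c3' * η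
        + c3' ^ 2 * (η ^ 2 - a')) * hη)
  obtain ⟨h0, h1, h2, h3⟩ := h
  have hPQ : (algebraMap F M c0 + algebraMap F M c2 * η ^ 2)
      * (algebraMap F M c1 + algebraMap F M c3 * η ^ 2) = 0 := by
    have h1' : algebraMap F M (2 * (c0 * c1 - b * c2 * c3)) = 0 := by rw [h1, map_zero]
    have h3' : algebraMap F M (2 * (c0 * c3 + c1 * c2 - a * c2 * c3)) = 0 := by
      rw [h3, map_zero]
    push_cast [map_sub, map_add, map_mul, map_pow, map_ofNat] at h1' h3'
    have : CharZero M := charZero_of_injective_algebraMap (algebraMap F M).injective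
    have h2' : (2 : M) ≠ 0 := two_ne_zero
    apply mul_left_cancel₀ h2'
    linear_combination h1' + h3' * η ^ 2
      + 2 * algebraMap F M c2 * algebraMap F M c3 * hη
  rcases mul_eq_zero.1 hPQ with h | h
  · obtain ⟨e0, -, e2, -⟩ := hli c0 0 c2 0 (by simpa using h)
    subst e0 e2
    exfalso
    by_cases hc3 : c3 = 0
    · subst hc3
      have : c1 = 0 := by simpa using h2
      subst this
      apply he; linear_combination -h0
    · apply hb
      refine ⟨(c1 - a * c3) / c3, ?_⟩
      field_simp
      linear_combination h2
  · obtain ⟨e1, -, e3, -⟩ := hli c1 0 c3 0 (by simpa using h)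
    subst e1 e3
    by_cases hc2 : c2 = 0
    · subst hc2
      left; exact ⟨c0, by linear_combination h0⟩
    · right
      have : c0 = a * c2 / 2 := by
        apply mul_left_cancel₀ hc2
        linear_combination h2 / 2
      subst this
      refine ⟨c2 * (a ^ 2 - 4 * b) / 2, ?_⟩
      linear_combination (a ^ 2 - 4 * b) * h0

lemma aux_sq12 {F : Type*} [Field F] [CharZero F] (a b e : F) (hirr : Irreducible (X ^ 12 + C a * X ^ 6 + C b : F[X]))
    (hb : ¬ ∃ s : F, s ^ 2 = b) (he : e ≠ 0)
    {M : Type*} [Field M] [Algebra F M] (hM : Module.finrank F M = 12) (θ : M)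
    (hθ : θ ^ 12 + algebraMap F M a * θ ^ 6 + algebraMap F M b = 0)
    (w : M) (hw : w ^ 2 = algebraMap F M e) :
    (∃ s : F, s ^ 2 = e) ∨ ∃ s : F, s ^ 2 = e * (a ^ 2 - 4 * b) := by
  have hfd : FiniteDimensional F M := Module.finite_of_finrank_pos (by omega)
  have hη : (θ ^ 3) ^ 4 + algebraMap F M a * (θ ^ 3) ^ 2 + algebraMap F M b = 0 := by
    linear_combination hθ
  have hmin := aux_minpoly4 a b hirr _ hη
  have hint : IsIntegral F (θ ^ 3) := IsIntegral.of_finite F _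
  let N := IntermediateField.adjoin F {θ ^ 3}
  have hN : Module.finrank F N = 4 := by
    rw [IntermediateField.adjoin.finrank hint, hmin]; compute_degree!
  have hNM : Module.finrank N M = 3 := by
    have := Module.finrank_mul_finrank F N M
    rw [hN, hM] at this
    omega
  let v := Algebra.norm N w
  have hv : v ^ 2 = algebraMap F N e ^ 3 := by
    have : Algebra.norm N (w ^ 2) = (algebraMap F N e) ^ 3 := by
      rw [hw, IsScalarTower.algebraMap_apply F N M, Algebra.norm_algebraMap, hNM]
    rw [← this, map_pow]
  have hv2 : (v / algebraMap F N e) ^ 2 = algebraMap F N e := by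
    have : algebraMap F N e ≠ 0 := by simpa using he
    field_simp
    rw [hv]
  obtain ⟨p, hp, hpe⟩ := (IntermediateField.adjoin.powerBasis hint).exists_eq_aeval
    (v / algebraMap F N e)
  have hdim : (IntermediateField.adjoin.powerBasis hint).dim = 4 := by
    rw [IntermediateField.adjoin.powerBasis_dim, hmin]; compute_degree!
  rw [hdim] at hp
  rw [Polynomial.as_sum_range' p 4 hp] at hpe
  simp only [Finset.sum_range_succ, Finset.sum_range_zero, map_add, aeval_monomial] at hpe
  rw [IntermediateField.adjoin.powerBasis_gen] at hpe
  refine aux_sq4 a b e hirr hb he (M := N) (IntermediateField.AdjoinSimple.gen F (θ ^ 3)) ?_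
    (p.coeff 0) (p.coeff 1) (p.coeff 2) (p.coeff 3) ?_
  · apply Subtype.ext
    simpa using hη
  · rw [← hv2, hpe]; simp; rfl

lemma aux_finrank2 {M L : Type*} [Field M] [Field L] [Algebra M L] (s : L) (b : M)
    (hs : s ^ 2 = algebraMap M L b) (hb : ¬ ∃ x : M, x ^ 2 = b) :
    IsIntegral M s ∧ Module.finrank M (IntermediateField.adjoin M {s}) = 2 := by
  have hmon : (X ^ 2 - C b : M[X]).Monic := by monicity!
  have hint : IsIntegral M s := ⟨X ^ 2 - C b, hmon, by simp [hs]⟩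
  refine ⟨hint, ?_⟩
  have hirr : Irreducible (X ^ 2 - C b : M[X]) := by
    apply X_pow_sub_C_irreducible_of_prime Nat.prime_two
    intro x hx; exact hb ⟨x, hx⟩
  rw [IntermediateField.adjoin.finrank hint,
    ← minpoly.eq_of_irreducible_of_monic hirr (by simp [hs]) hmon]
  compute_degree!

lemma aux_finrank4 {M L : Type*} [Field M] [CharZero M] [Field L] [Algebra M L] (s t : L) (b g : M)
    (hs : s ^ 2 = algebraMap M L b) (ht : t ^ 2 = algebraMap M L g)
    (hb : ¬ ∃ x : M, x ^ 2 = b) (hg : ¬ ∃ x : M, x ^ 2 = g)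
    (hbg : ¬ ∃ x : M, x ^ 2 = g * b)
    (htop : ∀ E : IntermediateField M L, s ∈ E → t ∈ E → E = ⊤) :
    Module.finrank M L = 4 := by
  obtain ⟨hint, h2⟩ := aux_finrank2 s b hs hb
  have hsM : ∀ x : M, algebraMap M L x ≠ s := by
    rintro x rfl
    exact hb ⟨x, (algebraMap M L).injective (by simpa using hs)⟩
  let N := IntermediateField.adjoin M {s}
  have key : ¬ ∃ x : N, x ^ 2 = algebraMap M N g := by
    rintro ⟨x, hx⟩
    obtain ⟨p, hp, hpe⟩ := (IntermediateField.adjoin.powerBasis hint).exists_eq_aeval x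
    have hdim : (IntermediateField.adjoin.powerBasis hint).dim = 2 := by
      rw [IntermediateField.adjoin.powerBasis_dim, ← IntermediateField.adjoin.finrank hint, h2]
    rw [hdim] at hp
    rw [Polynomial.as_sum_range' p 2 hp] at hpe
    simp only [Finset.sum_range_succ, Finset.sum_range_zero, map_add, aeval_monomial] at hpe
    rw [IntermediateField.adjoin.powerBasis_gen] at hpe
    have hx' : (x : L) = algebraMap M L (p.coeff 0) + algebraMap M L (p.coeff 1) * s := by
      rw [hpe]; simp
    have hx2 : (x : L) ^ 2 = algebraMap M L g := by
      have := congrArg (algebraMap N L) hx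
      simpa using this
    rw [hx'] at hx2
    generalize p.coeff 0 = u at *
    generalize p.coeff 1 = v at *
    have h3 : algebraMap M L (2 * u * v) * s = algebraMap M L (g - u ^ 2 - v ^ 2 * b) := by
      push_cast [map_sub, map_mul, map_pow, map_ofNat]
      linear_combination hx2 - algebraMap M L v ^ 2 * hs
    by_cases huv : 2 * u * v = 0
    · rw [huv, map_zero, zero_mul, eq_comm, map_eq_zero] at h3
      rcases mul_eq_zero.1 huv with h | h
      · have hu : u = 0 := by simpa using h
        subst hu
        exact hbg ⟨v * b, by linear_combination -b * h3⟩
      · subst h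
        exact hg ⟨u, by linear_combination -h3⟩
    · apply hsM ((g - u ^ 2 - v ^ 2 * b) / (2 * u * v))
      rw [map_div₀, ← h3]
      have : algebraMap M L (2 * u * v) ≠ 0 := by rwa [Ne, map_eq_zero]
      field_simp
  have ht' : t ^ 2 = algebraMap N L (algebraMap M N g) := by
    rw [ht]; rfl
  obtain ⟨hint', h2'⟩ := aux_finrank2 t (algebraMap M N g) ht' key
  have hE : (IntermediateField.adjoin N {t}).restrictScalars M = ⊤ := by
    apply htop
    · exact (IntermediateField.adjoin N {t}).algebraMap_mem
        ⟨s, IntermediateField.mem_adjoin_simple_self M s⟩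
    · exact IntermediateField.mem_adjoin_simple_self N t
  have hE' : IntermediateField.adjoin N {t} = ⊤ := by
    rw [eq_top_iff]
    intro x _
    have : x ∈ (IntermediateField.adjoin N {t}).restrictScalars M := by rw [hE]; trivial
    exact this
  rw [hE', IntermediateField.finrank_top'] at h2'
  rw [← Module.finrank_mul_finrank M N L, h2, h2']

lemma aux_unity {M L : Type*} [Field M] [CharZero M] [Field L] [Algebra M L]
    (E : IntermediateField M L) (t z : L) (ht : t ^ 2 = -3) (htE : t ∈ E) (hz : z ^ 6 = 1) :
    z ∈ E := by
  have : CharZero L := charZero_of_injective_algebraMap (algebraMap M L).injective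
  have h2 : (2 : L) ≠ 0 := two_ne_zero
  have h2E : (2 : L) ∈ E := by exact_mod_cast E.natCast_mem 2
  have h : (z - 1) * ((z + 1) * ((2 * z + 1 - t) * ((2 * z + 1 + t) *
      ((2 * z - 1 - t) * (2 * z - 1 + t))))) = 0 := by
    have : (z - 1) * ((z + 1) * ((2 * z + 1 - t) * ((2 * z + 1 + t) *
      ((2 * z - 1 - t) * (2 * z - 1 + t))))) =
      (z - 1) * ((z + 1) * (((2 * z + 1) ^ 2 - t ^ 2) * ((2 * z - 1) ^ 2 - t ^ 2))) := by ring
    rw [this, ht]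
    linear_combination 16 * hz
  have half : ∀ x : L, 2 * z = x → x ∈ E → z ∈ E := by
    intro x hx hxE
    have : z = x / 2 := by field_simp; linear_combination hx
    rw [this]; exact E.div_mem hxE h2E
  simp only [mul_eq_zero] at h
  rcases h with h | h | h | h | h | h
  · rw [sub_eq_zero.1 h]; exact E.one_mem
  · rw [eq_neg_of_add_eq_zero_left h]; exact E.neg_mem E.one_mem
  · exact half (t - 1) (by linear_combination h) (E.sub_mem htE E.one_mem)
  · exact half (-t - 1) (by linear_combination h) (E.sub_mem (E.neg_mem htE) E.one_mem)
  · exact half (t + 1) (by linear_combination h) (E.add_mem htE E.one_mem)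
  · exact half (-t + 1) (by linear_combination h) (E.add_mem (E.neg_mem htE) E.one_mem)

theorem aux_core {F L : Type*} [Field F] [CharZero F] [Field L] [Algebra F L]
    (a b : F) (f : F[X]) [IsSplittingField F L f] (h3 : ¬ ∃ s : F, s ^ 2 = -3)
    (hf : f = X ^ 12 + C a * X ^ 6 + C b) (hirr : Irreducible f)
    (hb_nsq : ¬ ∃ s : F, s ^ 2 = b)
    (hbd : ¬ ∃ s : F, s ^ 2 = b * (a ^ 2 - 4 * b))
    (hd : ¬ ∃ s : F, s ^ 2 = 3 * (4 * b - a ^ 2))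
    (h3b : ¬ ∃ s : F, s ^ 2 = -3 * b)
    (h3bd : ¬ ∃ s : F, s ^ 2 = 3 * b * (4 * b - a ^ 2))
    (hcr : (∃ c : F, c ^ 3 = b) ∨ ∃ r : F, r ^ 3 - 3 * b * r + a * b = 0) :
    Module.finrank F L = 48 := by
  have hb0 : b ≠ 0 := by rintro rfl; exact hb_nsq ⟨0, by norm_num⟩
  have hirr' := hirr
  rw [hf] at hirr'
  have hmonic : f.Monic := by rw [hf]; monicity!
  have hdeg : f.natDegree = 12 := by rw [hf]; compute_degree!
  have : FiniteDimensional F L := IsSplittingField.finiteDimensional L f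
  have hL : CharZero L := charZero_of_injective_algebraMap (algebraMap F L).injective
  let A : L := algebraMap F L a
  let B : L := algebraMap F L b
  have hB0 : B ≠ 0 := by simpa [B] using hb0
  have hsp : (f.map (algebraMap F L)).Splits := IsSplittingField.splits L f
  have hfm : f.map (algebraMap F L) = X ^ 12 + C A * X ^ 6 + C B := by
    rw [hf]; simp [A, B]
  have hf0 : f.map (algebraMap F L) ≠ 0 := (hmonic.map _).ne_zero
  have hroot : ∀ P : L[X], P ∣ f.map (algebraMap F L) → P.natDegree ≠ 0 → ∃ x, P.eval x = 0 := by
    intro P hP hPd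
    exact (hsp.of_dvd hf0 hP).exists_eval_eq_zero (fun h => hPd (natDegree_eq_of_degree_eq_some h))
  obtain ⟨θ, hθ⟩ := hroot _ dvd_rfl (by rw [natDegree_map, hdeg]; norm_num)
  rw [hfm] at hθ
  replace hθ : θ ^ 12 + A * θ ^ 6 + B = 0 := by simpa using hθ
  have hθ0 : θ ≠ 0 := by
    rintro rfl; apply hB0; simpa using hθ
  obtain ⟨φ, hφ⟩ := hroot (X ^ 6 + C (A + θ ^ 6)) (by
      rw [hfm]
      refine ⟨X ^ 6 - C (θ ^ 6), ?_⟩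
      have : B = - θ ^ 12 - A * θ ^ 6 := by linear_combination hθ
      rw [this]; simp only [map_sub, map_add, map_mul, map_neg, map_pow]; ring) (by
      have : (X ^ 6 + C (A + θ ^ 6)).natDegree = 6 := by compute_degree!
      rw [this]; norm_num)
  replace hφ : φ ^ 6 = - A - θ ^ 6 := by
    simp at hφ; linear_combination hφ
  obtain ⟨ρ, hρ⟩ := hroot (X ^ 4 + C (θ ^ 2) * X ^ 2 + C (θ ^ 4)) (by
      rw [hfm]
      refine ⟨(X ^ 2 - C (θ ^ 2)) * (X ^ 6 + C (A + θ ^ 6)), ?_⟩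
      have : B = - θ ^ 12 - A * θ ^ 6 := by linear_combination hθ
      rw [this]; simp only [map_sub, map_add, map_mul, map_neg, map_pow]; ring) (by
      have : (X ^ 4 + C (θ ^ 2) * X ^ 2 + C (θ ^ 4)).natDegree = 4 := by compute_degree!
      rw [this]; norm_num)
  replace hρ : ρ ^ 4 + θ ^ 2 * ρ ^ 2 + θ ^ 4 = 0 := by simpa using hρ
  obtain ⟨t, ht⟩ : ∃ t : L, t ^ 2 = -3 := by
    refine ⟨2 * (ρ / θ) ^ 2 + 1, ?_⟩
    field_simp
    linear_combination 4 * hρ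
  obtain ⟨s, hs⟩ : ∃ s : L, s ^ 2 = B := by
    refine ⟨(θ * φ) ^ 3, ?_⟩
    calc ((θ * φ) ^ 3) ^ 2 = θ ^ 6 * φ ^ 6 := by ring
      _ = B := by rw [hφ]; linear_combination -hθ
  let M := IntermediateField.adjoin F {θ}
  have hMc : CharZero M := charZero_of_injective_algebraMap (algebraMap F M).injective
  have hint : IsIntegral F θ := IsIntegral.of_finite F θ
  have hmin : minpoly F θ = f := by
    symm
    apply minpoly.eq_of_irreducible_of_monic hirr _ hmonic
    rw [hf]; simpa using hθ
  have hM : Module.finrank F M = 12 := by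
    rw [IntermediateField.adjoin.finrank hint, hmin, hdeg]
  let θM : M := IntermediateField.AdjoinSimple.gen F θ
  have hθM : θM ^ 12 + algebraMap F M a * θM ^ 6 + algebraMap F M b = 0 := by
    apply Subtype.ext
    simpa [θM] using hθ
  have hθM0 : θM ≠ 0 := by
    intro h; apply hθ0
    have := congrArg (algebraMap M L) h
    simpa [θM] using this
  have hsq := fun e he w => aux_sq12 a b e hirr' hb_nsq he hM θM hθM w
  obtain ⟨γ, hγ⟩ : ∃ γ : M, γ ^ 3 = algebraMap F M b := by
    rcases hcr with ⟨c, hc⟩ | ⟨r, hr⟩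
    · exact ⟨algebraMap F M c, by rw [← map_pow, hc]⟩
    · have hk : r ^ 2 - b ≠ 0 := fun h => hb_nsq ⟨r, by linear_combination h⟩
      have hr' : algebraMap F M (r ^ 3 - 3 * b * r + a * b) = 0 := by rw [hr, map_zero]
      have hk' : algebraMap F M (r ^ 2 - b) ≠ 0 := by rwa [Ne, map_eq_zero]
      have hb' : algebraMap F M b ≠ 0 := by rwa [Ne, map_eq_zero]
      push_cast [map_sub, map_add, map_mul, map_pow, map_ofNat] at hr' hk'
      generalize algebraMap F M a = a' at *
      generalize algebraMap F M b = b' at *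
      generalize algebraMap F M r = r' at *
      obtain ⟨δ, hδ⟩ : ∃ δ, δ = 2 * θM ^ 6 + a' := ⟨_, rfl⟩
      have hδ2 : δ ^ 2 = a' ^ 2 - 4 * b' := by rw [hδ]; linear_combination 4 * hθM
      obtain ⟨q, hq⟩ : ∃ q, q = b' * δ / (r' ^ 2 - b') := ⟨_, rfl⟩
      have hq1 : q * (r' ^ 2 - b') = b' * δ := by rw [hq]; field_simp
      have hq2 : q ^ 2 = r' ^ 2 - 4 * b' := by
        have h0 : (r' ^ 2 - b') ^ 2 ≠ 0 := pow_ne_zero _ hk'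
        apply mul_right_cancel₀ h0
        have : q ^ 2 * (r' ^ 2 - b') ^ 2 = b' ^ 2 * δ ^ 2 := by
          rw [← mul_pow, hq1, mul_pow]
        rw [this, hδ2]
        linear_combination (a' * b' - r' ^ 3 + 3 * b' * r') * hr'
      have hp : ((r' + q) / 2) ^ 3 = b' * θM ^ 6 := by
        have : θM ^ 6 = (δ - a') / 2 := by rw [hδ]; ring
        rw [this]
        field_simp
        linear_combination (3 * r' + q) * hq2 + 4 * hq1 + 4 * hr'
      refine ⟨((r' + q) / 2) / θM ^ 2, ?_⟩
      rw [div_pow, hp]; field_simp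
  have hγ0 : γ ≠ 0 := by
    rintro rfl
    rw [zero_pow (by norm_num), eq_comm, map_eq_zero] at hγ
    exact hb0 hγ
  let G : L := algebraMap M L γ
  have hG0 : G ≠ 0 := by simpa [G] using hγ0
  have hG : G ^ 3 = B := by
    have := congrArg (algebraMap M L) hγ
    rw [map_pow] at this
    exact this
  have hs0 : s ≠ 0 := by
    rintro rfl
    apply hB0; rw [← hs]; norm_num
  have h4 : Module.finrank M L = 4 := by
    apply aux_finrank4 s t (algebraMap F M b) (algebraMap F M (-3))
    · exact hs
    · rw [ht, map_neg, map_neg, map_ofNat, map_ofNat]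
    · rintro ⟨x, hx⟩
      rcases hsq b hb0 x hx with h | h
      · exact hb_nsq h
      · exact hbd h
    · rintro ⟨x, hx⟩
      rcases hsq (-3) (by norm_num) x hx with h | ⟨y, h⟩
      · exact h3 h
      · exact hd ⟨y, by rw [h]; ring⟩
    · rintro ⟨x, hx⟩
      rw [← map_mul] at hx
      rcases hsq (-3 * b) (by simpa using hb0) x hx with ⟨y, h⟩ | ⟨y, h⟩
      · exact h3b ⟨y, h⟩
      · exact h3bd ⟨y, by rw [h]; ring⟩
    · intro E hsE htE
      have hθE : θ ∈ E := E.algebraMap_mem θM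
      have hGE : G ∈ E := E.algebraMap_mem γ
      have hall : ∀ x ∈ f.rootSet L, x ∈ E := by
        intro x hx
        have hx1 : x ^ 12 + A * x ^ 6 + B = 0 := by
          have := (mem_rootSet.1 hx).2
          rw [hf] at this
          simpa using this
        have hx2 : (x ^ 6 - θ ^ 6) * (x ^ 6 + θ ^ 6 + A) = 0 := by
          linear_combination hx1 - hθ
        rcases mul_eq_zero.1 hx2 with h | h
        · have hz : (x / θ) ^ 6 = 1 := by
            rw [div_pow, sub_eq_zero.1 h]; field_simp
          have := E.mul_mem (aux_unity E t _ ht htE hz) hθE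
          rwa [div_mul_cancel₀ _ hθ0] at this
        · have h6 : (θ * x) ^ 6 = B := by
            linear_combination θ ^ 6 * h - hθ
          have hz : (θ * x * G / s) ^ 6 = 1 := by
            have e1 : (θ * x * G) ^ 6 = B ^ 3 := by
              rw [mul_pow, h6, show G ^ 6 = (G ^ 3) ^ 2 by ring, hG]; ring
            have e2 : s ^ 6 = B ^ 3 := by rw [← hs]; ring
            rw [div_pow, e1, e2]; field_simp
          have h1 := aux_unity E t _ ht htE hz
          have h2 := E.div_mem (E.mul_mem h1 hsE) (E.mul_mem hθE hGE)
          have h3 : θ * x * G / s * s / (θ * G) = x := by field_simp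
          rwa [h3] at h2
      have htop := IsSplittingField.adjoin_rootSet (K := F) L f
      rw [eq_top_iff]
      intro x _
      have hle : Algebra.adjoin F (f.rootSet L) ≤ (E.restrictScalars F).toSubalgebra :=
        Algebra.adjoin_le hall
      have hx : x ∈ Algebra.adjoin F (f.rootSet L) := by rw [htop]; trivial
      exact hle hx
  rw [← Module.finrank_mul_finrank F M L, hM, h4]

lemma aux_card {F : Type*} [Field F] [CharZero F] (f : F[X]) (hirr : Irreducible f) :
    Nat.card f.Gal = Module.finrank F f.SplittingField := by
  have : IsGalois F f.SplittingField := IsGalois.of_separable_splitting_field hirr.separable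
  exact IsGalois.card_aut_eq_finrank F f.SplittingField

lemma aux_main {F : Type*} [Field F] [CharZero F] (a b : F) (f : F[X])
    (h3 : ¬ ∃ s : F, s ^ 2 = -3)
    (hf : f = X ^ 12 + C a * X ^ 6 + C b) (hirr : Irreducible f)
    (hb_nsq : ¬ ∃ s : F, s ^ 2 = b)
    (hbd : ¬ ∃ s : F, s ^ 2 = b * (a ^ 2 - 4 * b))
    (hd : ¬ ∃ s : F, s ^ 2 = 3 * (4 * b - a ^ 2))
    (h3b : ¬ ∃ s : F, s ^ 2 = -3 * b)
    (h3bd : ¬ ∃ s : F, s ^ 2 = 3 * b * (4 * b - a ^ 2))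
    (hcr : (∃ c : F, c ^ 3 = b) ∨ ∃ r : F, r ^ 3 - 3 * b * r + a * b = 0) :
    Nat.card f.Gal = 48 := by
  rw [aux_card f hirr]
  exact aux_core a b f h3 hf hirr hb_nsq hbd hd h3b h3bd hcr

theorem gal_order_fortyeight_of_12T28 (a b : ℚ) (f : ℚ[X])
    (hf : f = X ^ 12 + C a * X ^ 6 + C b) (hirr : Irreducible f)
    (hb_nsq : ¬ ∃ s : ℚ, s ^ 2 = b)
    (hbd : ¬ ∃ s : ℚ, s ^ 2 = b * (a ^ 2 - 4 * b))
    (hd : ¬ ∃ s : ℚ, s ^ 2 = 3 * (4 * b - a ^ 2))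
    (h3b : ¬ ∃ s : ℚ, s ^ 2 = -3 * b)
    (h3bd : ¬ ∃ s : ℚ, s ^ 2 = 3 * b * (4 * b - a ^ 2))
    (hcr : (∃ c : ℚ, c ^ 3 = b) ∨ ∃ r : ℚ, r ^ 3 - 3 * b * r + a * b = 0) :
    Nat.card f.Gal = 48 := by
  refine aux_main a b f ?_ hf hirr hb_nsq hbd hd h3b h3bd hcr
  rintro ⟨y, h⟩
  nlinarith [sq_nonneg y]
end

section
/- Let a, b ∈ ℚ and suppose f(x) = x^12 + a·x^6 + b is irreducible over ℚ. Assume: b is not a square in ℚ; b·(a^2 − 4b) is not a square in ℚ; 3·(4b − a^2) is not a square in ℚ; −3b is not a square in ℚ; 3b·(4b − a^2) is not a square in ℚ; b is not a cube in ℚ; and the cubic x^3 − 3·b·x + a·b has no rational root. Then the Galois group of f over ℚ has order 144. -/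
open Polynomial
open IntermediateField Module

section generic
variable {K E : Type*} [Field K] [Field E] [Algebra K E]

lemma minpoly_root {p : ℕ} (hp : p.Prime) {c : K} (hc : ∀ y : K, y ^ p ≠ c) {x : E}
    (hx : x ^ p = algebraMap K E c) : minpoly K x = X ^ p - C c := by
  symm
  apply minpoly.eq_of_irreducible_of_monic (X_pow_sub_C_irreducible_of_prime hp hc)
  · simp [hx]
  · exact monic_X_pow_sub_C c hp.ne_zero

lemma integral_root {p : ℕ} (hp : p ≠ 0) {c : K} {x : E}
    (hx : x ^ p = algebraMap K E c) : IsIntegral K x :=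
  ⟨X ^ p - C c, monic_X_pow_sub_C c hp, by simp [hx]⟩

lemma finrank_root {p : ℕ} (hp : p.Prime) {c : K} (hc : ∀ y : K, y ^ p ≠ c) {x : E}
    (hx : x ^ p = algebraMap K E c) : finrank K E = p * finrank K⟮x⟯ E := by
  rw [← finrank_mul_finrank K K⟮x⟯ E, adjoin.finrank (integral_root hp.ne_zero hx),
    minpoly_root hp hc hx, natDegree_X_pow_sub_C]

lemma finrank_root_le {p : ℕ} (hp : p ≠ 0) {c : K} {x : E}
    (hx : x ^ p = algebraMap K E c) : finrank K E ≤ p * finrank K⟮x⟯ E := by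
  rw [← finrank_mul_finrank K K⟮x⟯ E, adjoin.finrank (integral_root hp hx)]
  apply Nat.mul_le_mul_right
  have h := minpoly.min K x (monic_X_pow_sub_C c hp) (by simp [hx])
  have := natDegree_le_natDegree h
  rwa [natDegree_X_pow_sub_C] at this

lemma gen_root {p : ℕ} {c : K} {x : E}
    (hx : x ^ p = algebraMap K E c) :
    (AdjoinSimple.gen K x) ^ p = algebraMap K K⟮x⟯ c := by
  apply (algebraMap K⟮x⟯ E).injective
  rw [map_pow, AdjoinSimple.algebraMap_gen, hx]
  rfl

lemma rep_root {p : ℕ} (hp : p.Prime) {c : K} (hc : ∀ y : K, y ^ p ≠ c) {x : E}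
    (hx : x ^ p = algebraMap K E c) (z : K⟮x⟯) :
    ∃ f : K[X], f.natDegree < p ∧ z = aeval (AdjoinSimple.gen K x) f := by
  have hi := integral_root hp.ne_zero hx
  have hd : (adjoin.powerBasis hi).dim = p := by
    rw [adjoin.powerBasis_dim, minpoly_root hp hc hx, natDegree_X_pow_sub_C]
  obtain ⟨f, h1, h2⟩ := (adjoin.powerBasis hi).exists_eq_aeval z
  exact ⟨f, hd ▸ h1, by simpa using h2⟩

lemma rep2 {c : K} (hc : ∀ y : K, y ^ 2 ≠ c) {x : E}
    (hx : x ^ 2 = algebraMap K E c) (z : K⟮x⟯) :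
    ∃ u v : K, z = algebraMap K K⟮x⟯ u + algebraMap K K⟮x⟯ v * AdjoinSimple.gen K x := by
  obtain ⟨f, h1, h2⟩ := rep_root Nat.prime_two hc hx z
  refine ⟨f.coeff 0, f.coeff 1, ?_⟩
  rw [h2, aeval_eq_sum_range' h1]
  simp [Finset.sum_range_succ, Algebra.smul_def]

lemma rep3 {c : K} (hc : ∀ y : K, y ^ 3 ≠ c) {x : E}
    (hx : x ^ 3 = algebraMap K E c) (z : K⟮x⟯) :
    ∃ u v w : K, z = algebraMap K K⟮x⟯ u + algebraMap K K⟮x⟯ v * AdjoinSimple.gen K x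
      + algebraMap K K⟮x⟯ w * AdjoinSimple.gen K x ^ 2 := by
  obtain ⟨f, h1, h2⟩ := rep_root Nat.prime_three hc hx z
  refine ⟨f.coeff 0, f.coeff 1, f.coeff 2, ?_⟩
  rw [h2, aeval_eq_sum_range' h1]
  simp [Finset.sum_range_succ, Algebra.smul_def]

/-- linear independence of `1, x` -/
lemma indep2 {L : Type*} [Field L] [Algebra K L] {c : K} (hc : ∀ y : K, y ^ 2 ≠ c) {x : L}
    (hx : x ^ 2 = algebraMap K L c) {u v : K}
    (h : algebraMap K L u + algebraMap K L v * x = 0) : u = 0 ∧ v = 0 := by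
  have hv : v = 0 := by
    by_contra hv
    apply hc (-u / v)
    apply (algebraMap K L).injective
    have hv' : algebraMap K L v ≠ 0 := by simpa using hv
    rw [← hx, map_pow, map_div₀, map_neg]
    congr 1
    field_simp
    linear_combination -h
  subst hv
  simpa using h

lemma indep3 {L : Type*} [Field L] [Algebra K L] {c : K} (hc : ∀ y : K, y ^ 3 ≠ c) {x : L}
    (hx : x ^ 3 = algebraMap K L c) {u v w : K}
    (h : algebraMap K L u + algebraMap K L v * x + algebraMap K L w * x ^ 2 = 0) :
    u = 0 ∧ v = 0 ∧ w = 0 := by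
  have hp : (C u + C v * X + C w * X ^ 2 : K[X]) = 0 := by
    by_contra hne
    have h1 := minpoly.degree_le_of_ne_zero K x hne (by simpa using h)
    rw [minpoly_root Nat.prime_three hc hx, degree_X_pow_sub_C (by norm_num)] at h1
    have h2 : (C u + C v * X + C w * X ^ 2 : K[X]).degree ≤ 2 := by compute_degree
    exact absurd (h1.trans h2) (by decide)
  refine ⟨?_, ?_, ?_⟩
  · simpa using congrArg (coeff · 0) hp
  · simpa [coeff_X, coeff_C] using congrArg (coeff · 1) hp
  · simpa [coeff_X, coeff_C] using congrArg (coeff · 2) hp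

lemma sq_descent [CharZero K] {c d : K} (hc : ∀ y : K, y ^ 2 ≠ c) {x : E}
    (hx : x ^ 2 = algebraMap K E c) (h1 : ∀ y : K, y ^ 2 ≠ d) (h2 : ∀ y : K, y ^ 2 ≠ c * d) :
    ∀ y : K⟮x⟯, y ^ 2 ≠ algebraMap K K⟮x⟯ d := by
  intro y hy
  obtain ⟨u, v, rfl⟩ := rep2 hc hx y
  have hg := gen_root hx
  have := indep2 (u := u ^ 2 + c * v ^ 2 - d) (v := 2 * u * v) hc hg (by
    simp only [map_sub, map_add, map_mul, map_pow, map_ofNat]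
    linear_combination hy - (algebraMap K K⟮x⟯ v) ^ 2 * hg)
  obtain ⟨e1, e2⟩ := this
  have : u = 0 ∨ v = 0 := by simpa using e2
  rcases this with rfl | rfl
  · exact h2 (c * v) (by linear_combination c * e1)
  · exact h1 u (by linear_combination e1)

lemma cube_descent2 [CharZero K] {c d : K} (hc : ∀ y : K, y ^ 2 ≠ c) {x : E}
    (hx : x ^ 2 = algebraMap K E c) (h1 : ∀ y : K, y ^ 3 ≠ d) :
    ∀ y : K⟮x⟯, y ^ 3 ≠ algebraMap K K⟮x⟯ d := by
  intro y hy
  obtain ⟨u, v, rfl⟩ := rep2 hc hx y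
  have hg := gen_root hx
  have := indep2 (u := u ^ 3 + 3 * c * u * v ^ 2 - d) (v := 3 * u ^ 2 * v + v ^ 3 * c) hc hg (by
    simp only [map_sub, map_add, map_mul, map_pow, map_ofNat]
    linear_combination hy - (3 * (algebraMap K K⟮x⟯ u) * (algebraMap K K⟮x⟯ v) ^ 2
      + (algebraMap K K⟮x⟯ v) ^ 3 * AdjoinSimple.gen K x) * hg)
  obtain ⟨e1, e2⟩ := this
  have hd : d ≠ 0 := fun h => h1 0 (by simp [h])
  have key : (u ^ 2 - c * v ^ 2) ^ 3 = d ^ 2 := by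
    linear_combination (u ^ 3 + 3 * c * u * v ^ 2 + d) * e1 -
       c * (3 * u ^ 2 * v + v ^ 3 * c) * e2
  apply h1 (d / (u ^ 2 - c * v ^ 2))
  rw [div_pow, key]
  field_simp

lemma cube_descent3 [CharZero K] {c d : K} (hc : ∀ y : K, y ^ 3 ≠ c) {x : E}
    (hx : x ^ 3 = algebraMap K E c) (h1 : ∀ y : K, y ^ 3 ≠ d) (h2 : ∀ y : K, y ^ 3 ≠ c * d)
    (h3 : ∀ y : K, y ^ 3 ≠ c ^ 2 * d) :
    ∀ y : K⟮x⟯, y ^ 3 ≠ algebraMap K K⟮x⟯ d := by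
  intro y hy
  obtain ⟨p, q, r, rfl⟩ := rep3 hc hx y
  have hg := gen_root hx
  set P := algebraMap K K⟮x⟯ p with hP
  set Q := algebraMap K K⟮x⟯ q with hQ
  set R := algebraMap K K⟮x⟯ r with hR
  set T := AdjoinSimple.gen K x with hT
  have := indep3 (u := p ^ 3 + q ^ 3 * c + r ^ 3 * c ^ 2 + 6 * p * q * r * c - d)
     (v := 3 * (p ^ 2 * q + q ^ 2 * r * c + p * r ^ 2 * c))
     (w := 3 * (p ^ 2 * r + p * q ^ 2 + q * r ^ 2 * c)) hc hg (by
    simp only [map_sub, map_add, map_mul, map_pow, map_ofNat, ← hP, ← hQ, ← hR, ← hg]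
    linear_combination hy)
  obtain ⟨e1, e2, e3⟩ := this
  have e2' : p ^ 2 * q + q ^ 2 * r * c + p * r ^ 2 * c = 0 := by simpa using e2
  have e3' : p ^ 2 * r + p * q ^ 2 + q * r ^ 2 * c = 0 := by simpa using e3
  have hc0 : c ≠ 0 := fun h => hc 0 (by simp [h])
  have e4 : p * (r ^ 3 * c - q ^ 3) = 0 := by linear_combination r * e2' - q * e3'
  rcases mul_eq_zero.1 e4 with rfl | e4
  · have : q = 0 ∨ r = 0 := by simpa [hc0] using e2'
    rcases this with rfl | rfl
    · exact h2 (r * c) (by linear_combination c * e1)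
    · exact h3 (q * c) (by linear_combination c ^ 2 * e1)
  · have hr : r = 0 := by
      by_contra hr
      apply hc (q / r)
      field_simp
      linear_combination -e4
    subst hr
    have hq : q = 0 := by simpa using e4
    subst hq
    exact h1 p (by linear_combination e1)

lemma four_dvd_s15 [CharZero K] {c d : K} (h1 : ∀ y : K, y ^ 2 ≠ c) (h2 : ∀ y : K, y ^ 2 ≠ d)
    (h3 : ∀ y : K, y ^ 2 ≠ c * d) {x y : E}
    (hx : x ^ 2 = algebraMap K E c) (hy : y ^ 2 = algebraMap K E d) : 4 ∣ finrank K E := by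
  rw [finrank_root Nat.prime_two h1 hx,
    finrank_root (K := K⟮x⟯) Nat.prime_two (sq_descent h1 hx h2 h3) (x := y) hy]
  exact ⟨_, by ring⟩

lemma nine_dvd_s15 [CharZero K] {c d : K} (h1 : ∀ y : K, y ^ 3 ≠ c) (h2 : ∀ y : K, y ^ 3 ≠ d)
    (h3 : ∀ y : K, y ^ 3 ≠ c * d) (h4 : ∀ y : K, y ^ 3 ≠ c ^ 2 * d) {x y : E}
    (hx : x ^ 3 = algebraMap K E c) (hy : y ^ 3 = algebraMap K E d) : 9 ∣ finrank K E := by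
  rw [finrank_root Nat.prime_three h1 hx,
    finrank_root (K := K⟮x⟯) Nat.prime_three (cube_descent3 h1 hx h2 h3 h4) (x := y) hy]
  exact ⟨_, by ring⟩

/-- elements with the same sixth power -/
lemma six_roots {M : Type*} [Field M] [Algebra M E] [CharZero E] {r α : E} {s : M} {α' : M}
    (hα : algebraMap M E α' = α)
    (hs : s ^ 2 = -3) (hα0 : α ≠ 0) (h : r ^ 6 = α ^ 6) : r ∈ Set.range (algebraMap M E) := by
  have hs' : (algebraMap M E s) ^ 2 = -3 := by rw [← map_pow, hs, map_neg, map_ofNat]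
  set S := algebraMap M E s
  have key : (r - α) * (r + α) * ((2 * r + α - S * α) * (2 * r + α + S * α)) *
     ((2 * r - α - S * α) * (2 * r - α + S * α)) = 0 := by
    have e1 : (2 * r + α - S * α) * (2 * r + α + S * α) = 4 * (r ^ 2 + r * α + α ^ 2) := by
      linear_combination -α ^ 2 * hs'
    have e2 : (2 * r - α - S * α) * (2 * r - α + S * α) = 4 * (r ^ 2 - r * α + α ^ 2) := by
      linear_combination -α ^ 2 * hs'
    rw [e1, e2]
    linear_combination 16 * h
  simp only [mul_eq_zero] at key
  have h2 : (2 : E) ≠ 0 := two_ne_zero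
  have : r = α ∨ r = -α ∨ r = (S * α - α) / 2 ∨ r = (-S * α - α) / 2 ∨ r = (S * α + α) / 2 ∨
      r = (-S * α + α) / 2 := by
    rcases key with ((h | h) | (h | h)) | (h | h)
    · left; linear_combination h
    · right; left; linear_combination h
    · right; right; left; linear_combination h / 2
    · right; right; right; left; linear_combination h / 2
    · right; right; right; right; left; linear_combination h / 2
    · right; right; right; right; right; linear_combination h / 2
  rcases this with h | h | h | h | h | h
  · exact ⟨α', by rw [h, hα]⟩
  · exact ⟨-α', by rw [h, map_neg, hα]⟩
  · exact ⟨(s * α' - α') / 2, by rw [h]; simp [hα, S, map_ofNat (algebraMap M E) 2]⟩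
  · exact ⟨(-s * α' - α') / 2, by rw [h]; simp [hα, S, map_ofNat (algebraMap M E) 2]⟩
  · exact ⟨(s * α' + α') / 2, by rw [h]; simp [hα, S, map_ofNat (algebraMap M E) 2]⟩
  · exact ⟨(-s * α' + α') / 2, by rw [h]; simp [hα, S, map_ofNat (algebraMap M E) 2]⟩


lemma finrank_36 [CharZero K] [CharZero E] [FiniteDimensional K E] {t₁ t₂ s : K} {α β : E}
    (hs : s ^ 2 = -3)
    (hα : α ^ 6 = algebraMap K E t₁) (hβ : β ^ 6 = algebraMap K E t₂)
    (q1 : ∀ y : K, y ^ 2 ≠ t₁) (q2 : ∀ y : K, y ^ 2 ≠ t₂) (q3 : ∀ y : K, y ^ 2 ≠ t₁ * t₂)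
    (c1 : ∀ y : K, y ^ 3 ≠ t₁) (c2 : ∀ y : K, y ^ 3 ≠ t₂) (c3 : ∀ y : K, y ^ 3 ≠ t₁ * t₂)
    (c4 : ∀ y : K, y ^ 3 ≠ t₁ ^ 2 * t₂) [Algebra ℚ E] (S : Set E)
    (hS : ∀ r ∈ S, r ^ 6 = α ^ 6 ∨ r ^ 6 = β ^ 6) (htop : Algebra.adjoin ℚ S = ⊤) :
    finrank K E = 36 := by
  have h4 : 4 ∣ finrank K E := four_dvd_s15 q1 q2 q3 (x := α ^ 3) (y := β ^ 3)
    (by rw [← hα]; ring) (by rw [← hβ]; ring)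
  have h9 : 9 ∣ finrank K E := nine_dvd_s15 c1 c2 c3 c4 (x := α ^ 2) (y := β ^ 2)
    (by rw [← hα]; ring) (by rw [← hβ]; ring)
  have hpos : 0 < finrank K E := finrank_pos
  have hα0 : α ≠ 0 := by
    rintro rfl
    apply q1 0
    apply (algebraMap K E).injective
    rw [← hα]; simp
  have hβ0 : β ≠ 0 := by
    rintro rfl
    apply q2 0
    apply (algebraMap K E).injective
    rw [← hβ]; simp
  have u1 := finrank_root_le (by norm_num) hα
  have u2 := finrank_root_le (K := K⟮α⟯) (c := algebraMap K K⟮α⟯ t₂) (x := β) (p := 6)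
    (by norm_num) hβ
  have hsurj : Function.Surjective (algebraMap K⟮α⟯⟮β⟯ E) := by
    intro z
    have hz : z ∈ Algebra.adjoin ℚ S := by rw [htop]; trivial
    let s' : K⟮α⟯⟮β⟯ := algebraMap K⟮α⟯ K⟮α⟯⟮β⟯ (algebraMap K K⟮α⟯ s)
    have hs' : s' ^ 2 = -3 := by
      simp only [s', ← map_pow, hs, map_neg, map_ofNat]
    change z ∈ Set.range (algebraMap K⟮α⟯⟮β⟯ E)
    induction hz using Algebra.adjoin_induction with
    | mem r hr =>
      rcases hS r hr with h | h
      · exact six_roots (α' := algebraMap K⟮α⟯ K⟮α⟯⟮β⟯ (AdjoinSimple.gen K α)) rfl hs' hα0 h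
      · exact six_roots (α' := AdjoinSimple.gen K⟮α⟯ β) rfl hs' hβ0 h
    | algebraMap q => exact ⟨(q : K⟮α⟯⟮β⟯), by rw [map_ratCast, eq_ratCast]⟩
    | add x y _ _ hx hy =>
      obtain ⟨x, rfl⟩ := hx
      obtain ⟨y, rfl⟩ := hy
      exact ⟨x + y, map_add _ _ _⟩
    | mul x y _ _ hx hy =>
      obtain ⟨x, rfl⟩ := hx
      obtain ⟨y, rfl⟩ := hy
      exact ⟨x * y, map_mul _ _ _⟩
  have u3 : finrank K⟮α⟯⟮β⟯ E ≤ 1 := by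
    apply finrank_le_one (1 : E)
    intro z
    obtain ⟨w, rfl⟩ := hsurj z
    exact ⟨w, by rw [Algebra.smul_def, mul_one]⟩
  omega

end generic

/-- properties of `t = (-a + δ) / 2` in a quadratic field -/
lemma quad_props {F : Type*} [Field F] [CharZero F] {_ : Algebra ℚ F} {a b : ℚ} {δ : F}
    (hD : ∀ y : ℚ, y ^ 2 ≠ a ^ 2 - 4 * b)
    (hδ : δ ^ 2 = algebraMap ℚ F (a ^ 2 - 4 * b))
    (hrep : ∀ z : F, ∃ u v : ℚ, z = algebraMap ℚ F u + algebraMap ℚ F v * δ)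
    (hb : ¬ ∃ s : ℚ, s ^ 2 = b) (hnc : ¬ ∃ c : ℚ, c ^ 3 = b)
    (hnr : ¬ ∃ r : ℚ, r ^ 3 - 3 * b * r + a * b = 0)
    {t : F} (ht : 2 * t = -algebraMap ℚ F a + δ) :
    (∀ y : F, y ^ 2 ≠ t) ∧ (∀ y : F, y ^ 2 ≠ -3 * t) ∧ (∀ y : F, y ^ 3 ≠ t) ∧
      (∀ y : F, y ^ 3 ≠ algebraMap ℚ F b * t) := by
  refine ⟨fun y hy => ?_, fun y hy => ?_, fun y hy => ?_, fun y hy => ?_⟩ <;>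
  obtain ⟨u, v, rfl⟩ := hrep y
  · obtain ⟨e1, e2⟩ := indep2 (u := 2 * (u ^ 2 + v ^ 2 * (a ^ 2 - 4 * b)) + a) (v := 4 * u * v - 1)
      hD hδ (by
        simp only [map_sub, map_add, map_mul, map_pow, map_ofNat, map_one] at hδ ⊢
        linear_combination 2 * hy + ht - 2 * (algebraMap ℚ F v) ^ 2 * hδ)
    apply hb ⟨u ^ 2 - v ^ 2 * (a ^ 2 - 4 * b), ?_⟩
    linear_combination (u ^ 2 + v ^ 2 * (a ^ 2 - 4 * b) - a / 2) / 2 * e1 -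
      (4 * u * v + 1) * (a ^ 2 - 4 * b) / 4 * e2
  · obtain ⟨e1, e2⟩ := indep2 (u := 2 * (u ^ 2 + v ^ 2 * (a ^ 2 - 4 * b)) - 3 * a)
      (v := 4 * u * v + 3)
      hD hδ (by
        simp only [map_sub, map_add, map_mul, map_pow, map_ofNat, map_one] at hδ ⊢
        linear_combination 2 * hy - 3 * ht - 2 * (algebraMap ℚ F v) ^ 2 * hδ)
    apply hb ⟨(u ^ 2 - v ^ 2 * (a ^ 2 - 4 * b)) / 3, ?_⟩
    linear_combination ((u ^ 2 + v ^ 2 * (a ^ 2 - 4 * b) + 3 * a / 2) / 2 * e1 -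
      (4 * u * v - 3) * (a ^ 2 - 4 * b) / 4 * e2) / 9
  · obtain ⟨e1, e2⟩ := indep2 (u := 2 * (u ^ 3 + 3 * u * v ^ 2 * (a ^ 2 - 4 * b)) + a)
      (v := 2 * (3 * u ^ 2 * v + v ^ 3 * (a ^ 2 - 4 * b)) - 1)
      hD hδ (by
        simp only [map_sub, map_add, map_mul, map_pow, map_ofNat, map_one] at hδ ⊢
        linear_combination 2 * hy + ht - 2 * (3 * algebraMap ℚ F u * (algebraMap ℚ F v) ^ 2
          + (algebraMap ℚ F v) ^ 3 * δ) * hδ)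
    apply hnc ⟨u ^ 2 - v ^ 2 * (a ^ 2 - 4 * b), ?_⟩
    linear_combination (2 * (u ^ 3 + 3 * u * v ^ 2 * (a ^ 2 - 4 * b)) - a) / 4 * e1 -
      (2 * (3 * u ^ 2 * v + v ^ 3 * (a ^ 2 - 4 * b)) + 1) * (a ^ 2 - 4 * b) / 4 * e2
  · obtain ⟨e1, e2⟩ := indep2 (u := 2 * (u ^ 3 + 3 * u * v ^ 2 * (a ^ 2 - 4 * b)) + a * b)
      (v := 2 * (3 * u ^ 2 * v + v ^ 3 * (a ^ 2 - 4 * b)) - b)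
      hD hδ (by
        simp only [map_sub, map_add, map_mul, map_pow, map_ofNat, map_one] at hδ ⊢
        linear_combination 2 * hy + algebraMap ℚ F b * ht
          - 2 * (3 * algebraMap ℚ F u * (algebraMap ℚ F v) ^ 2
          + (algebraMap ℚ F v) ^ 3 * δ) * hδ)
    have e3 : (u ^ 2 - v ^ 2 * (a ^ 2 - 4 * b)) ^ 3 = b ^ 3 := by
      linear_combination (2 * (u ^ 3 + 3 * u * v ^ 2 * (a ^ 2 - 4 * b)) - a * b) / 4 * e1 -
        (2 * (3 * u ^ 2 * v + v ^ 3 * (a ^ 2 - 4 * b)) + b) * (a ^ 2 - 4 * b) / 4 * e2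
    have e4 : u ^ 2 - v ^ 2 * (a ^ 2 - 4 * b) = b := (Odd.strictMono_pow (by decide)).injective e3
    apply hnr ⟨2 * u, ?_⟩
    linear_combination e1 + 6 * u * e4

lemma finrank_splitting {E : Type*} [Field E] [CharZero E] [Algebra ℚ E] [FiniteDimensional ℚ E]
    (a b : ℚ) (f : ℚ[X])
    (hf : f = X ^ 12 + C a * X ^ 6 + C b) (hirr : Irreducible f)
    (hb_nsq : ¬ ∃ s : ℚ, s ^ 2 = b)
    (hbd : ¬ ∃ s : ℚ, s ^ 2 = b * (a ^ 2 - 4 * b))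
    (hd : ¬ ∃ s : ℚ, s ^ 2 = 3 * (4 * b - a ^ 2))
    (h3b : ¬ ∃ s : ℚ, s ^ 2 = -3 * b)
    (h3bd : ¬ ∃ s : ℚ, s ^ 2 = 3 * b * (4 * b - a ^ 2))
    (hnc : ¬ ∃ c : ℚ, c ^ 3 = b)
    (hnr : ¬ ∃ r : ℚ, r ^ 3 - 3 * b * r + a * b = 0)
    (hspl : (f.map (algebraMap ℚ E)).Splits) (htop : Algebra.adjoin ℚ (f.rootSet E) = ⊤) :
    finrank ℚ E = 144 := by
  -- the discriminant is not a square
  have hD : ∀ y : ℚ, y ^ 2 ≠ a ^ 2 - 4 * b := by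
    intro y hy
    have hfac : f = (X ^ 6 + C ((a - y) / 2)) * (X ^ 6 + C ((a + y) / 2)) := by
      have h1 : C a = C ((a - y) / 2) + C ((a + y) / 2) := by
        rw [← C_add]; congr 1; ring
      have h2 : C b = C ((a - y) / 2) * C ((a + y) / 2) := by
        rw [← C_mul]; congr 1; linear_combination hy / 4
      rw [hf, h1, h2]; ring
    rcases hirr.isUnit_or_isUnit hfac with h | h
    · have := natDegree_eq_zero_of_isUnit h
      rw [natDegree_X_pow_add_C] at this
      omega
    · have := natDegree_eq_zero_of_isUnit h
      rw [natDegree_X_pow_add_C] at this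
      omega
  have hb0 : b ≠ 0 := fun h => hb_nsq ⟨0, by simp [h]⟩
  set A := algebraMap ℚ E a with hA
  set B := algebraMap ℚ E b with hB
  have hB0 : B ≠ 0 := by simpa [hB] using hb0
  have hmap : f.map (algebraMap ℚ E) = X ^ 12 + C A * X ^ 6 + C B := by
    rw [hf]; simp [hA, hB]
  have hne : f.map (algebraMap ℚ E) ≠ 0 :=
    (Polynomial.map_ne_zero_iff (algebraMap ℚ E).injective).2 hirr.ne_zero
  obtain ⟨α, hα⟩ := hspl.exists_eval_eq_zero (by
    rw [hmap]
    have : (X ^ 12 + C A * X ^ 6 + C B : E[X]).degree = 12 := by compute_degree!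
    rw [this]; decide)
  rw [hmap] at hα
  simp only [eval_add, eval_mul, eval_pow, eval_X, eval_C] at hα
  have hα0 : α ≠ 0 := by
    rintro rfl
    apply hB0
    simpa using hα
  -- a root `β` of `X ^ 6 = t₂`
  obtain ⟨β, hβ⟩ : ∃ β : E, β ^ 6 = -A - α ^ 6 := by
    have hdvd : X ^ 6 - C (-A - α ^ 6) ∣ f.map (algebraMap ℚ E) := by
      refine ⟨X ^ 6 - C (α ^ 6), ?_⟩
      have h2 : C B = C (-A - α ^ 6) * C (α ^ 6) := by
        rw [← C_mul]; congr 1; linear_combination hα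
      rw [hmap, h2]
      simp only [C_sub, C_neg]
      ring
    obtain ⟨β, hβ⟩ := (hspl.of_dvd hne hdvd).exists_eval_eq_zero (by
      rw [degree_X_pow_sub_C (by norm_num)]; decide)
    refine ⟨β, ?_⟩
    simp only [eval_sub, eval_pow, eval_X, eval_C] at hβ
    linear_combination hβ
  obtain ⟨s, hs⟩ : ∃ s : E, s ^ 2 = -3 := by
    have hdvd : X ^ 2 + C α * X + C (α ^ 2) ∣ f.map (algebraMap ℚ E) := by
      refine ⟨(X - C α) * (X ^ 3 + C α ^ 3) * (X ^ 6 - C (-A - α ^ 6)), ?_⟩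
      have h2 : C B = C (-A - α ^ 6) * C (α ^ 6) := by
        rw [← C_mul]; congr 1; linear_combination hα
      rw [hmap, h2]
      simp only [C_sub, C_neg, C_pow]
      ring
    obtain ⟨r, hr⟩ := (hspl.of_dvd hne hdvd).exists_eval_eq_zero (by
      have : (X ^ 2 + C α * X + C (α ^ 2) : E[X]).degree = 2 := by compute_degree!
      rw [this]; decide)
    refine ⟨(2 * r + α) / α, ?_⟩
    simp only [eval_add, eval_mul, eval_pow, eval_X, eval_C] at hr
    field_simp
    linear_combination 4 * hr
  set δ : E := 2 * α ^ 6 + A with hδdef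
  have hδ : δ ^ 2 = algebraMap ℚ E (a ^ 2 - 4 * b) := by
    simp only [map_sub, map_mul, map_pow, map_ofNat, ← hA, ← hB]
    linear_combination 4 * hα
  have hroots : ∀ r ∈ f.rootSet E, r ^ 6 = α ^ 6 ∨ r ^ 6 = β ^ 6 := by
    intro r hr
    rw [mem_rootSet] at hr
    have h := hr.2
    rw [hf] at h
    simp only [map_add, map_mul, map_pow, aeval_X, aeval_C, ← hA, ← hB] at h
    have : (r ^ 6 - α ^ 6) * (r ^ 6 - β ^ 6) = 0 := by
      rw [hβ]; linear_combination h - hα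
    rcases mul_eq_zero.1 this with h | h
    · left; linear_combination h
    · right; linear_combination h
  -- the quadratic subfield
  rw [finrank_root Nat.prime_two hD hδ]
  have hg := gen_root hδ
  have hrep := rep2 hD hδ
  set g := AdjoinSimple.gen ℚ δ with hgdef
  have hgE : algebraMap ℚ⟮δ⟯ E g = δ := rfl
  have m3 : ∀ y : ℚ⟮δ⟯, y ^ 2 ≠ -3 := by
    have := sq_descent hD hδ (d := -3) (fun y hy => by nlinarith [sq_nonneg y])
      (fun y hy => hd ⟨y, by linear_combination hy⟩)
    simpa only [map_neg, map_ofNat] using this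
  have m3b : ∀ y : ℚ⟮δ⟯, y ^ 2 ≠ -3 * (@algebraMap ℚ ℚ⟮δ⟯ _ _ ℚ⟮δ⟯.algebra' b) := by
    have := sq_descent hD hδ (d := -3 * b) (fun y hy => h3b ⟨y, hy⟩)
      (fun y hy => h3bd ⟨y, by linear_combination hy⟩)
    simpa only [map_mul, map_neg, map_ofNat] using this
  have mb : ∀ y : ℚ⟮δ⟯, y ^ 2 ≠ (@algebraMap ℚ ℚ⟮δ⟯ _ _ ℚ⟮δ⟯.algebra' b) :=
    sq_descent hD hδ (fun y hy => hb_nsq ⟨y, hy⟩)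
      (fun y hy => hbd ⟨y, by linear_combination hy⟩)
  have cb : ∀ y : ℚ⟮δ⟯, y ^ 3 ≠ (@algebraMap ℚ ℚ⟮δ⟯ _ _ ℚ⟮δ⟯.algebra' b) :=
    cube_descent2 hD hδ (fun y hy => hnc ⟨y, hy⟩)
  set a' := (@algebraMap ℚ ℚ⟮δ⟯ _ _ ℚ⟮δ⟯.algebra' a) with ha'
  set b' := (@algebraMap ℚ ℚ⟮δ⟯ _ _ ℚ⟮δ⟯.algebra' b) with hb'
  have haE : algebraMap ℚ⟮δ⟯ E a' = A := rfl
  obtain ⟨t₁, ht₁⟩ : ∃ t : ℚ⟮δ⟯, 2 * t = -a' + g := ⟨(-a' + g) / 2, by ring⟩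
  obtain ⟨t₂, ht₂⟩ : ∃ t : ℚ⟮δ⟯, 2 * t = -a' + -g := ⟨(-a' + -g) / 2, by ring⟩
  obtain ⟨p1, p2, p3, p4⟩ := quad_props hD hg hrep hb_nsq hnc hnr ht₁
  obtain ⟨r1, r2, r3, r4⟩ := quad_props (δ := -g) hD (by rw [neg_sq, hg])
    (fun z => by
      obtain ⟨u, v, h⟩ := hrep z
      exact ⟨u, -v, by rw [h, map_neg]; ring⟩) hb_nsq hnc hnr ht₂
  rw [← hb'] at p4 r4
  have htt : t₁ * t₂ = b' := by
    simp only [map_sub, map_mul, map_pow, map_ofNat, ← ha', ← hb'] at hg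
    linear_combination (2 * t₂ * ht₁ + (-a' + g) * ht₂ - hg) / 4
  have hαt : α ^ 6 = algebraMap ℚ⟮δ⟯ E t₁ := by
    have := congrArg (algebraMap ℚ⟮δ⟯ E) ht₁
    rw [map_mul, map_add, map_neg, map_ofNat, hgE, haE] at this
    linear_combination (-this - hδdef) / 2
  have hβt : β ^ 6 = algebraMap ℚ⟮δ⟯ E t₂ := by
    have := congrArg (algebraMap ℚ⟮δ⟯ E) ht₂
    rw [map_mul, map_add, map_neg, map_neg, map_ofNat, hgE, haE] at this
    linear_combination (-this + hδdef) / 2 + hβ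
  have hs' : s ^ 2 = algebraMap ℚ⟮δ⟯ E (-3) := by rw [hs, map_neg, map_ofNat]
  rw [finrank_root Nat.prime_two m3 hs']
  have hgs := gen_root hs'
  rw [finrank_36 (K := ℚ⟮δ⟯⟮s⟯) (s := AdjoinSimple.gen ℚ⟮δ⟯ s)
    (t₁ := algebraMap ℚ⟮δ⟯ ℚ⟮δ⟯⟮s⟯ t₁) (t₂ := algebraMap ℚ⟮δ⟯ ℚ⟮δ⟯⟮s⟯ t₂) (α := α) (β := β)
    (by rw [hgs, map_neg, map_ofNat]) hαt hβt
    (sq_descent m3 hs' p1 p2) (sq_descent m3 hs' r1 r2)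
    (by rw [← map_mul, htt]; exact sq_descent m3 hs' mb m3b)
    (cube_descent2 m3 hs' p3) (cube_descent2 m3 hs' r3)
    (by rw [← map_mul, htt]; exact cube_descent2 m3 hs' cb)
    (by
      rw [← map_pow, ← map_mul]
      have : t₁ ^ 2 * t₂ = b' * t₁ := by rw [← htt]; ring
      rw [this]
      exact cube_descent2 m3 hs' p4)
    (f.rootSet E) hroots htop]

theorem gal_order_oneFortyFour_of_12T81 (a b : ℚ) (f : ℚ[X])
    (hf : f = X ^ 12 + C a * X ^ 6 + C b) (hirr : Irreducible f)
    (hb_nsq : ¬ ∃ s : ℚ, s ^ 2 = b)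
    (hbd : ¬ ∃ s : ℚ, s ^ 2 = b * (a ^ 2 - 4 * b))
    (hd : ¬ ∃ s : ℚ, s ^ 2 = 3 * (4 * b - a ^ 2))
    (h3b : ¬ ∃ s : ℚ, s ^ 2 = -3 * b)
    (h3bd : ¬ ∃ s : ℚ, s ^ 2 = 3 * b * (4 * b - a ^ 2))
    (hnc : ¬ ∃ c : ℚ, c ^ 3 = b)
    (hnr : ¬ ∃ r : ℚ, r ^ 3 - 3 * b * r + a * b = 0) :
    Nat.card f.Gal = 144 := by
  rw [Polynomial.Gal.card_of_separable hirr.separable]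
  exact finrank_splitting a b f hf hirr hb_nsq hbd hd h3b h3bd hnc hnr
    (SplittingField.splits f) (SplittingField.adjoin_rootSet f)
end

section
/- Let a, b ∈ ℚ and suppose f(x) = x^12 + a·x^6 + b is irreducible over ℚ. Assume: b is a square in ℚ; 3·(4b − a^2) is a square in ℚ; and either b is a cube in ℚ or the cubic x^3 − 3·b·x + a·b has a rational root. Then the Galois group of f over ℚ has order 12. -/
open Polynomial

/-- If `-3` is a square, then `X ^ 6 - c ^ 6` splits. -/
lemma splits_X6 {L : Type*} [Field L] [CharZero L] (c q : L) (hq : q ^ 2 = -3) :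
    Splits (X ^ 6 - C (c ^ 6) : L[X]) := by
  have key : (X ^ 6 - C (c ^ 6) : L[X]) =
      (X - C c) * (X + C c) * (X - C ((1 + q) / 2 * c)) * (X + C ((1 + q) / 2 * c)) *
      (X - C ((1 - q) / 2 * c)) * (X + C ((1 - q) / 2 * c)) := by
    obtain ⟨z, hz⟩ : ∃ z : L, z = (1 + q) / 2 := ⟨_, rfl⟩
    have hz2 : z ^ 2 = z - 1 := by
      rw [hz]; linear_combination (1 / 4 : L) * hq
    have hz' : (1 - q) / 2 = 1 - z := by rw [hz]; ring
    rw [hz', ← hz]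
    have hZ : (C z : L[X]) ^ 2 = C z - 1 := by
      rw [← C_pow, hz2]; simp
    simp only [C_mul, C_pow, C_sub, C_1]
    generalize (C z : L[X]) = Z at hZ
    generalize (C c : L[X]) = D
    have e : (X - D) * (X + D) * (X - Z * D) * (X + Z * D) * (X - (1 - Z) * D) *
        (X + (1 - Z) * D) = (X ^ 2 - D ^ 2) * (X ^ 2 - Z ^ 2 * D ^ 2) *
        (X ^ 2 - (1 - 2 * Z + Z ^ 2) * D ^ 2) := by ring
    rw [e, hZ]
    linear_combination (X ^ 2 - D ^ 2) * D ^ 4 * hZ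
  rw [key]
  exact (((((Splits.X_sub_C _).mul (Splits.X_add_C _)).mul (Splits.X_sub_C _)).mul
    (Splits.X_add_C _)).mul (Splits.X_sub_C _)).mul (Splits.X_add_C _)

/-- `X ^ 12 + A X ^ 6 + B` splits once a root, a square root of `-3` and a cube root of
`s = √B` are available. -/
lemma splits_X12 {L : Type*} [Field L] [CharZero L] (A B s d q x : L) (hq : q ^ 2 = -3)
    (hs : s ^ 2 = B) (hd : d ^ 3 = s) (hx0 : x ≠ 0) (hx : x ^ 12 + A * x ^ 6 + B = 0) :
    Splits (X ^ 12 + C A * X ^ 6 + C B : L[X]) := by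
  have h2 : (d / x) ^ 6 = - A - x ^ 6 := by
    field_simp
    have : d ^ 6 = B := by rw [← hs, ← hd]; ring
    linear_combination this + hx
  have hB : B = x ^ 6 * (d / x) ^ 6 := by rw [h2]; linear_combination hx
  have hA : A = - x ^ 6 - (d / x) ^ 6 := by rw [h2]; ring
  have : (X ^ 12 + C A * X ^ 6 + C B : L[X]) =
      (X ^ 6 - C (x ^ 6)) * (X ^ 6 - C ((d / x) ^ 6)) := by
    rw [hB, hA]; simp only [C_mul, C_sub, C_neg]; ring
  rw [this]
  exact (splits_X6 _ q hq).mul (splits_X6 _ q hq)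

lemma splits_main {L : Type*} [Field L] [Algebra ℚ L] [CharZero L] (a b : ℚ) (f : ℚ[X])
    (hf : f = X ^ 12 + C a * X ^ 6 + C b) (hirr : Irreducible f)
    (hb_sq : ∃ s : ℚ, s ^ 2 = b)
    (hd : ∃ s : ℚ, s ^ 2 = 3 * (4 * b - a ^ 2))
    (hcr : (∃ c : ℚ, c ^ 3 = b) ∨ ∃ r : ℚ, r ^ 3 - 3 * b * r + a * b = 0)
    (x : L) (hroot : aeval x f = 0) : Splits (f.map (algebraMap ℚ L)) := by
  obtain ⟨s, hs⟩ := hb_sq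
  obtain ⟨t, ht⟩ := hd
  have hdeg : f.natDegree = 12 := by rw [hf]; compute_degree!
  have hmonic : f.Monic := by rw [hf]; monicity!
  have hx : x ^ 12 + (a : L) * x ^ 6 + (b : L) = 0 := by
    rw [hf] at hroot
    simpa using hroot
  have hmin : ∀ c : ℚ, x ^ 6 ≠ (c : L) := by
    intro c hc
    have hdvd : f ∣ X ^ 6 - C c := by
      have h1 : minpoly ℚ x = f := (minpoly.eq_of_irreducible_of_monic hirr hroot hmonic).symm
      rw [← h1]
      apply minpoly.dvd
      simp [hc]
    have hd6 : (X ^ 6 - C c : ℚ[X]).natDegree = 6 := by compute_degree!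
    have := natDegree_le_of_dvd hdvd (X_pow_sub_C_ne_zero (by norm_num) c)
    omega
  have hx0 : x ≠ 0 := by
    intro h; apply hmin 0; rw [h]; simp
  have hb0 : b ≠ 0 := by
    rintro rfl
    apply hmin (-a)
    have h6 : x ^ 6 * (x ^ 6 + a) = 0 := by
      have := hx
      push_cast at this
      linear_combination this
    have := (mul_eq_zero.mp h6).resolve_left (pow_ne_zero _ hx0)
    push_cast
    linear_combination this
  have hs0 : s ≠ 0 := by rintro rfl; apply hb0; rw [← hs]; norm_num
  have hS : (s : L) ^ 2 = b := by exact_mod_cast congrArg (fun z : ℚ => (z : L)) hs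
  have hT : (t : L) ^ 2 = 3 * (4 * b - a ^ 2) := by
    exact_mod_cast congrArg (fun z : ℚ => (z : L)) ht
  have hb0' : (b : L) ≠ 0 := by exact_mod_cast hb0
  have hs0' : (s : L) ≠ 0 := by exact_mod_cast hs0
  have hD : 3 * (2 * x ^ 6 + a) ^ 2 = - (t : L) ^ 2 := by
    rw [hT]; linear_combination 12 * hx
  have ht0 : (t : L) ≠ 0 := by
    intro h
    rw [h] at hD
    have h3 : (2 * x ^ 6 + (a : L)) ^ 2 = 0 := by linear_combination (1 / 3 : L) * hD
    have h4 := pow_eq_zero_iff (two_ne_zero) |>.mp h3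
    apply hmin (-a / 2)
    push_cast
    linear_combination (1 / 2 : L) * h4
  have hq : (3 * (2 * x ^ 6 + (a : L)) / t) ^ 2 = -3 := by
    field_simp
    linear_combination hD
  have hcube : ∃ w : L, w ^ 3 = b := by
    rcases hcr with ⟨c, hc⟩ | ⟨r, hr⟩
    · exact ⟨c, by exact_mod_cast congrArg (fun z : ℚ => (z : L)) hc⟩
    · have hR : (r : L) ^ 3 - 3 * b * r + a * b = 0 := by
        exact_mod_cast congrArg (fun z : ℚ => (z : L)) hr
      have key : (b : L) ^ 2 * (x ^ 6 + r) ^ 3 = x ^ 6 * ((r : L) ^ 2 - b) ^ 3 := by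
        linear_combination (b * x ^ 6 + (r : L) ^ 3) * ((b : L) * hx - x ^ 6 * hR)
      have hne : (r : L) ^ 2 - b ≠ 0 := by
        intro h
        rw [h] at key
        have h1 : (b : L) ^ 2 * (x ^ 6 + r) ^ 3 = 0 := by rw [key]; ring
        have h2 := (mul_eq_zero.mp h1).resolve_left (pow_ne_zero _ hb0')
        have h3 := pow_eq_zero_iff (three_ne_zero) |>.mp h2
        apply hmin (-r)
        push_cast
        linear_combination h3
      refine ⟨b * (x ^ 6 + r) / (r ^ 2 - b) / x ^ 2, ?_⟩
      rw [div_pow, div_pow, div_div, div_eq_iff (mul_ne_zero (pow_ne_zero _ hne) (pow_ne_zero _ (pow_ne_zero _ hx0)))]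
      linear_combination (b : L) * key
  obtain ⟨w, hw⟩ := hcube
  have hw0 : w ≠ 0 := by rintro rfl; apply hb0'; rw [← hw]; ring
  have hdd : ((s : L) / w) ^ 3 = s := by
    rw [div_pow, hw, ← hS]; field_simp
  have := splits_X12 (a : L) b s (s / w) _ x hq hS hdd hx0 hx
  rw [hf]
  simpa using this

theorem gal_order_twelve_of_12T3_case2 (a b : ℚ) (f : ℚ[X])
    (hf : f = X ^ 12 + C a * X ^ 6 + C b) (hirr : Irreducible f)
    (hb_sq : ∃ s : ℚ, s ^ 2 = b)
    (hd : ∃ s : ℚ, s ^ 2 = 3 * (4 * b - a ^ 2))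
    (hcr : (∃ c : ℚ, c ^ 3 = b) ∨ ∃ r : ℚ, r ^ 3 - 3 * b * r + a * b = 0) :
    Nat.card f.Gal = 12 := by
  have : Fact (Irreducible f) := ⟨hirr⟩
  have hdeg : f.natDegree = 12 := by rw [hf]; compute_degree!
  have hf0 : f ≠ 0 := hirr.ne_zero
  have hchar : CharZero (AdjoinRoot f) :=
    charZero_of_injective_algebraMap (algebraMap ℚ (AdjoinRoot f)).injective
  have hroot : @aeval ℚ (AdjoinRoot f) _ _ (AdjoinRoot.instAlgebra f) (AdjoinRoot.root f) f = 0 := by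
    rw [AdjoinRoot.aeval_eq, AdjoinRoot.mk_self]
  have hsplit := @splits_main (AdjoinRoot f) _ (AdjoinRoot.instAlgebra f) _ a b f hf hirr
    hb_sq hd hcr (AdjoinRoot.root f) hroot
  have hsf : @IsSplittingField ℚ (AdjoinRoot f) _ _ (AdjoinRoot.instAlgebra f) f := by
    refine @IsSplittingField.mk ℚ (AdjoinRoot f) _ _ (AdjoinRoot.instAlgebra f) f hsplit ?_
    rw [eq_top_iff, ← AdjoinRoot.adjoinRoot_eq_top]
    apply Algebra.adjoin_mono
    rw [Set.singleton_subset_iff, mem_rootSet]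
    exact ⟨hf0, hroot⟩
  rw [Gal.card_of_separable hirr.separable, ← hdeg, ← AdjoinRoot.powerBasis_dim hf0,
    ← (AdjoinRoot.powerBasis hf0).finrank]
  exact (@IsSplittingField.algEquiv ℚ (AdjoinRoot f) _ _
    (AdjoinRoot.instAlgebra f) f hsf).toLinearEquiv.finrank_eq.symm
end

section
/- Let a, b ∈ ℚ and suppose f(x) = x^12 + a·x^6 + b is irreducible over ℚ. Then the discriminant of f, expressed as the discriminant (Algebra.discr) over ℚ of the power basis 1, θ, θ^2, …, θ^11 of the field ℚ[x]/(f) generated by the image θ of x, equals 2^12 · 3^12 · b^5 · (a^2 − 4b)^6. -/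
open Polynomial

/-- The same statement for an abstract extension `L / K` of characteristic zero fields. -/
theorem discr_dodecic_aux {K L : Type*} [Field K] [CharZero K] [Field L] [Algebra K L]
    (a b : K) (f : K[X]) (hf : f = X ^ 12 + C a * X ^ 6 + C b) (hirr : Irreducible f)
    (pb : PowerBasis K L) (hmin : minpoly K pb.gen = f) :
    Algebra.discr K pb.basis = 2 ^ 12 * 3 ^ 12 * b ^ 5 * (a ^ 2 - 4 * b) ^ 6 := by
  have hdeg : f.natDegree = 12 := by rw [hf]; compute_degree!
  have hfin : Module.Finite K L := pb.finite
  have hdim : pb.dim = 12 := by rw [← pb.natDegree_minpoly, hmin, hdeg]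
  have hrank : Module.finrank K L = 12 := by rw [pb.finrank, hdim]
  have hroot : pb.gen ^ 12 + algebraMap K L a * pb.gen ^ 6 + algebraMap K L b = 0 := by
    have h := minpoly.aeval K pb.gen
    rw [hmin, hf] at h
    simpa using h
  have hnr : Algebra.norm K pb.gen = b := by
    rw [Algebra.PowerBasis.norm_gen_eq_coeff_zero_minpoly, hmin, hdim, hf]; simp; ring
  have hns : ∀ c : K, c ^ 2 ≠ a ^ 2 - 4 * b := by
    intro c hc
    have hb : b = (a ^ 2 - c ^ 2) / 4 := by field_simp; linear_combination hc
    have hfac : f = (X ^ 6 + C ((a + c) / 2)) * (X ^ 6 + C ((a - c) / 2)) := by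
      have e1 : C a = C ((a + c) / 2) + C ((a - c) / 2) := by rw [← C_add]; congr 1; ring
      have e2 : C b = C ((a + c) / 2) * C ((a - c) / 2) := by
        rw [← C_mul, hb]; congr 1; ring
      rw [hf, e1, e2]; ring
    have hd : ∀ r : K, (X ^ 6 + C r : K[X]).natDegree = 6 := fun r => by compute_degree!
    rcases hirr.isUnit_or_isUnit hfac with h | h <;>
    · have := natDegree_eq_zero_of_isUnit h
      rw [hd] at this; omega
  obtain ⟨δ, hδ⟩ : ∃ δ : L, δ = 2 * pb.gen ^ 6 + algebraMap K L a := ⟨_, rfl⟩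
  have hδ2 : δ ^ 2 = algebraMap K L (a ^ 2 - 4 * b) := by
    rw [hδ]; simp only [map_sub, map_mul, map_pow, map_ofNat]
    linear_combination 4 * hroot
  have hδmin : minpoly K δ = X ^ 2 - C (a ^ 2 - 4 * b) := by
    symm
    apply minpoly.eq_of_irreducible_of_monic
    · exact X_pow_sub_C_irreducible_of_prime Nat.prime_two hns
    · rw [map_sub, aeval_X_pow, aeval_C, hδ2, sub_self]
    · monicity!
  have hδint : IsIntegral K δ := Algebra.IsIntegral.isIntegral δ
  have hδd : (minpoly K δ).natDegree = 2 := by rw [hδmin]; compute_degree!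
  have hδn : Algebra.norm K δ = (a ^ 2 - 4 * b) ^ 6 := by
    have hm := Module.finrank_mul_finrank K (IntermediateField.adjoin K {δ}) L
    rw [IntermediateField.adjoin.finrank hδint, hδd, hrank] at hm
    rw [Algebra.norm_eq_norm_adjoin,
      show Module.finrank (IntermediateField.adjoin K {δ}) L = 6 by omega]
    have h := Algebra.PowerBasis.norm_gen_eq_coeff_zero_minpoly
      (IntermediateField.adjoin.powerBasis hδint)
    rw [IntermediateField.adjoin.powerBasis_gen, IntermediateField.adjoin.powerBasis_dim, hδd,
      IntermediateField.minpoly_gen, hδmin] at h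
    rw [h, coeff_sub, coeff_C_zero, coeff_X_pow]; simp; ring
  have hder : aeval pb.gen (derivative f) = algebraMap K L 6 * pb.gen ^ 5 * δ := by
    rw [hf, hδ]
    simp
    simp only [map_ofNat]
    ring
  rw [Algebra.discr_powerBasis_eq_norm, hmin, hder, hrank,
    map_mul, map_mul, map_pow, hnr, hδn, Algebra.norm_algebraMap, hrank]
  norm_num

theorem discr_dodecic_trinomial (a b : ℚ) (f : ℚ[X])
    (hf : f = X ^ 12 + C a * X ^ 6 + C b) (hirr : Irreducible f) :
    Algebra.discr ℚ (AdjoinRoot.powerBasis hirr.ne_zero).basis =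
      2 ^ 12 * 3 ^ 12 * b ^ 5 * (a ^ 2 - 4 * b) ^ 6 := by
  have : Fact (Irreducible f) := ⟨hirr⟩
  have hmonic : f.Monic := by rw [hf]; monicity!
  exact discr_dodecic_aux a b f hf hirr (AdjoinRoot.powerBasis hirr.ne_zero)
    (AdjoinRoot.minpoly_powerBasis_gen_of_monic hmonic hirr.ne_zero)
end
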